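/- With notation as usual, define N₄(B) = Σ_{u₁ | C(ξ₁), u₂ ≤ ξ₃} M⁺_{ℛ_l}(B)/k^{ω(𝒟)}, where M⁺_{ℛ_l}(B) = (3B)ⁿ·#ℛ_l/lⁿ and l = u₁u₂𝒟. Then there exists a positive constant C₄ such that N₄(B) = O(Bⁿ·exp(2(n+1)(k−1)ξ₁)/(log B)^{C₄/log₃B}). In particular, choosing ξ₁(B) = max{1, C₄ log₂B/(4(n+1)(k−1)log₃B)} gives N₄(B) = O(Bⁿ·exp(−C₄ log₂B/(2log₃B))) = o(Bⁿ). -/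

import Mathlib

open MvPolynomial Filter Pointwise

noncomputable section

/-- The linear form with coefficient vector `c`. -/
def linForm {R : Type*} [CommRing R] {n : ℕ} (c : Fin n → R) : MvPolynomial (Fin n) R :=
  ∑ i, C (c i) * X i

/-- `ρ_F(m)`: the number of zeros of `F` in `(ℤ/mℤ)ⁿ`. -/
def rhoF {n : ℕ} (F : MvPolynomial (Fin n) ℤ) (m : ℕ) : ℕ :=
  Nat.card {a : Fin n → ZMod m // MvPolynomial.eval a (F.map (Int.castRingHom (ZMod m))) = 0}

/-- The discriminant `Δ(F) = ∏_{i₁<⋯<iₙ} |det(L_{i₁},…,L_{iₙ})|`, the product being over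
all `n`-element subsets of the linear factors (parametrized by strictly monotone maps). -/
def discProd {n d : ℕ} (L : Fin d → Fin n → ℂ) : ℝ :=
  ∏ᶠ g ∈ {g : Fin n → Fin d | StrictMono g},
    ‖Matrix.det (Matrix.of fun i j => L (g i) j)‖

/-- `F` is a decomposable form with linear factors `L₁,…,L_d` having
algebraic-integer coefficients. -/
def IsDecomp {n d : ℕ} (F : MvPolynomial (Fin n) ℤ) (L : Fin d → Fin n → ℂ) : Prop :=
  (∀ j i, IsIntegral ℤ (L j i)) ∧ F.map (Int.castRingHom ℂ) = ∏ j, linForm (L j)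

/-- An integer is `k`-free if it is divisible by no `k`-th power of a prime. -/
def KFree (k : ℕ) (N : ℤ) : Prop := ∀ p : ℕ, p.Prime → ¬ ((p : ℤ) ^ k ∣ N)

/-- `N_{F,k}(B)`. -/
def NFk {n : ℕ} (F : MvPolynomial (Fin n) ℤ) (k : ℕ) (B : ℝ) : ℕ :=
  Set.ncard {x : Fin n → ℤ | (∀ i, |(x i : ℝ)| ≤ B) ∧ KFree k (MvPolynomial.eval x F)}

def log1 (x : ℝ) : ℝ := max 1 (Real.log x)
def log2 (x : ℝ) : ℝ := log1 (log1 x)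
def log3 (x : ℝ) : ℝ := log1 (log2 x)

/-- `ξ₁` is eventually increasing, tends to infinity and is `O(log₂ B / log₃ B)`. -/
def Xi1Good (ξ₁ : ℝ → ℝ) : Prop :=
  (∃ B₀ : ℝ, ∀ ⦃B B' : ℝ⦄, B₀ ≤ B → B ≤ B' → ξ₁ B ≤ ξ₁ B') ∧
  Tendsto ξ₁ atTop atTop ∧ (ξ₁ =O[atTop] fun B => log2 B / log3 B)

def xi2 (n : ℕ) (B : ℝ) : ℝ := B ^ n * Real.log B ^ ((2 : ℝ) / 3)

def xi3 (C₁ : ℝ) (k : ℕ) (B : ℝ) : ℝ := C₁ * B ^ 2 * Real.log B ^ (-(2 * (k : ℝ)) / 3)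

/-- `C(ξ₁) = ∏_{p ≤ ξ₁} p^{k-1}`. -/
def Cxi (k : ℕ) (ξ : ℝ) : ℕ := ∏ᶠ p ∈ {p : ℕ | p.Prime ∧ (p : ℝ) ≤ ξ}, p ^ (k - 1)

/-- `𝒟(u₂) = ∏ p` over primes `ξ₁ < p ≤ (1/12)log(B²/u₂)`, `p ∤ u₂`, `p ≡ 1 (mod k)`. -/
def scrD (k : ℕ) (ξ₁ B : ℝ) (u₂ : ℕ) : ℕ :=
  ∏ᶠ p ∈ {p : ℕ | p.Prime ∧ ξ₁ < (p : ℝ) ∧ (p : ℝ) ≤ Real.log (B ^ 2 / (u₂ : ℝ)) / 12 ∧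
      ¬ p ∣ u₂ ∧ p % k = 1}, p

/-- The set `𝒮_p ⊆ 𝔽_pⁿ` attached to a factorization `F = F*·∏𝓛ᵢ` over `ℤ_p`. -/
def Sp {n : ℕ} (p : ℕ) (hp : p.Prime) {τ : ℕ}
    (𝓛 : Fin τ → Fin n → @PadicInt p ⟨hp⟩)
    (Fstar : MvPolynomial (Fin n) (@PadicInt p ⟨hp⟩)) (x : Fin n → ZMod p) : Prop :=
  (∃ i j : Fin τ, i < j ∧ (∑ m, (@PadicInt.toZMod p ⟨hp⟩) (𝓛 i m) * x m) = 0 ∧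
      (∑ m, (@PadicInt.toZMod p ⟨hp⟩) (𝓛 j m) * x m) = 0) ∨
  MvPolynomial.eval x (Fstar.map (@PadicInt.toZMod p ⟨hp⟩)) = 0

/-- The data `(𝓛ᵢ, F*)` is a factorization of `F` over `ℤ_p` with `F*` having no
linear factor over `ℚ_p`. -/
def IsPadicFact {n : ℕ} (F : MvPolynomial (Fin n) ℤ) (p : ℕ) (hp : p.Prime) {τ : ℕ}
    (𝓛 : Fin τ → Fin n → @PadicInt p ⟨hp⟩)
    (Fstar : MvPolynomial (Fin n) (@PadicInt p ⟨hp⟩)) : Prop :=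
  F.map (Int.castRingHom (@PadicInt p ⟨hp⟩)) = Fstar * ∏ i, linForm (𝓛 i) ∧
  ∀ c : Fin n → @Padic p ⟨hp⟩, (∃ i, c i ≠ 0) →
    ¬ (linForm c ∣ Fstar.map (@PadicInt.Coe.ringHom p ⟨hp⟩))


-- τ_F(p) intrinsically: number of linear factors of F mod p up to scaling
def tauFp {n : ℕ} (F : MvPolynomial (Fin n) ℤ) (p : ℕ) : ℕ :=
  Nat.card {c : Fin n → ZMod p //
    (∃ i, c i = 1 ∧ ∀ j, j < i → c j = 0) ∧
    linForm c ∣ F.map (Int.castRingHom (ZMod p))}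

def tauF {n : ℕ} (F : MvPolynomial (Fin n) ℤ) (m : ℕ) : ℕ :=
  ∏ p ∈ m.primeFactors, tauFp F p

def sigmaPow (α : ℝ) (m : ℕ) : ℝ := ∑ s ∈ m.divisors, (s : ℝ) ^ α

-- sup norm / lattice minimum / lattice point count
def supNorm {n : ℕ} (x : Fin n → ℤ) : ℕ := Finset.univ.sup fun i => (x i).natAbs

def latMin {n : ℕ} (Λ : AddSubgroup (Fin n → ℤ)) : ℕ :=
  sInf {m : ℕ | ∃ x ∈ Λ, x ≠ 0 ∧ supNorm x = m}

def NLat {n : ℕ} (Λ : AddSubgroup (Fin n → ℤ)) (B : ℝ) : ℕ :=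
  Set.ncard {x : Fin n → ℤ | x ∈ Λ ∧ ∀ i, |(x i : ℝ)| ≤ B}

-- the H_{u₁,u₂}(B) count
def Hcount {n : ℕ} (F : MvPolynomial (Fin n) ℤ)
    {τ : ∀ p : ℕ, p.Prime → ℕ}
    (𝓛 : ∀ (p : ℕ) (hp : p.Prime), Fin (τ p hp) → Fin n → @PadicInt p ⟨hp⟩)
    (Fstar : ∀ (p : ℕ) (hp : p.Prime), MvPolynomial (Fin n) (@PadicInt p ⟨hp⟩))
    (k u₁ u₂ D : ℕ) (B : ℝ) : ℕ :=
  Set.ncard {m : Fin n → ℤ | (∀ i, |(m i : ℝ)| ≤ B) ∧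
    (u₁ : ℤ) ∣ MvPolynomial.eval m F ∧ (u₂ : ℤ) ∣ MvPolynomial.eval m F ∧
    (∃ s : ℕ, s < D ∧ (D : ℤ) ∣ (MvPolynomial.eval m F - (u₁ : ℤ) * u₂ * (s : ℤ) ^ k)) ∧
    ∀ (p : ℕ) (hp : p.Prime), p ∣ u₁ * u₂ →
      ¬ Sp p hp (𝓛 p hp) (Fstar p hp) (fun i => ((m i : ZMod p)))}

-- N₃(B)
def N3count {n : ℕ} (F : MvPolynomial (Fin n) ℤ) (k : ℕ) (ξ₁ ξ₂ B : ℝ) : ℕ :=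
  Set.ncard {x : Fin n → ℤ | (∀ i, |(x i : ℝ)| ≤ B) ∧
    (∃ p : ℕ, p.Prime ∧ ξ₂ < (p : ℝ) ∧ (p : ℤ) ^ k ∣ MvPolynomial.eval x F) ∧
    (∀ p : ℕ, p.Prime → ξ₁ < (p : ℝ) → (p : ℝ) ≤ ξ₂ → ¬ ((p : ℤ) ^ 2 ∣ MvPolynomial.eval x F)) ∧
    (∀ p : ℕ, p.Prime → (p : ℤ) ^ k ∣ MvPolynomial.eval x F → ξ₁ < (p : ℝ))}

-- N₃*(B)
def N3starCount {n : ℕ}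
    {τ : ∀ p : ℕ, p.Prime → ℕ}
    (𝓛 : ∀ (p : ℕ) (hp : p.Prime), Fin (τ p hp) → Fin n → @PadicInt p ⟨hp⟩)
    (Fstar : ∀ (p : ℕ) (hp : p.Prime), MvPolynomial (Fin n) (@PadicInt p ⟨hp⟩))
    (ξ₁ B : ℝ) : ℕ :=
  Set.ncard {x : Fin n → ℤ | (∀ i, |(x i : ℝ)| ≤ B) ∧
    ∃ (p : ℕ) (hp : p.Prime), ξ₁ < (p : ℝ) ∧
      Sp p hp (𝓛 p hp) (Fstar p hp) (fun i => ((x i : ZMod p)))}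

-- N₃†(B)
def N3dag {n : ℕ} (F : MvPolynomial (Fin n) ℤ)
    {τ : ∀ p : ℕ, p.Prime → ℕ}
    (𝓛 : ∀ (p : ℕ) (hp : p.Prime), Fin (τ p hp) → Fin n → @PadicInt p ⟨hp⟩)
    (Fstar : ∀ (p : ℕ) (hp : p.Prime), MvPolynomial (Fin n) (@PadicInt p ⟨hp⟩))
    (k : ℕ) (ξ₁ ξ₂ B : ℝ) : ℕ :=
  Set.ncard {x : Fin n → ℤ | (∀ i, |(x i : ℝ)| ≤ B) ∧
    ∃ (u : ℤ) (q : ℕ), q.Prime ∧ ξ₂ < (q : ℝ) ∧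
      MvPolynomial.eval x F = u * (q : ℤ) ^ k ∧
      (∀ p : ℕ, p.Prime → (p : ℝ) ≤ ξ₁ → ¬ ((p : ℤ) ^ k ∣ u)) ∧
      (∀ p : ℕ, p.Prime → ξ₁ < (p : ℝ) → (p : ℝ) ≤ ξ₂ → ¬ ((p : ℤ) ^ 2 ∣ u)) ∧
      (∀ (p : ℕ) (hp : p.Prime), (p : ℤ) ∣ u →
        ¬ Sp p hp (𝓛 p hp) (Fstar p hp) (fun i => ((x i : ZMod p))))}

-- ℛ_l : congruence classes mod l = u₁u₂D
def Rset {n : ℕ} (F : MvPolynomial (Fin n) ℤ)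
    {τ : ∀ p : ℕ, p.Prime → ℕ}
    (𝓛 : ∀ (p : ℕ) (hp : p.Prime), Fin (τ p hp) → Fin n → @PadicInt p ⟨hp⟩)
    (Fstar : ∀ (p : ℕ) (hp : p.Prime), MvPolynomial (Fin n) (@PadicInt p ⟨hp⟩))
    (k u₁ u₂ D : ℕ) : Set (Fin n → ZMod (u₁ * u₂ * D)) :=
  {m | ∃ a : Fin n → ℤ, (∀ i, ((a i : ZMod (u₁ * u₂ * D))) = m i) ∧
    (u₁ : ℤ) ∣ MvPolynomial.eval a F ∧ (u₂ : ℤ) ∣ MvPolynomial.eval a F ∧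
    (∃ s : ℕ, s < D ∧ (D : ℤ) ∣ (MvPolynomial.eval a F - (u₁ : ℤ) * u₂ * (s : ℤ) ^ k)) ∧
    ∀ (p : ℕ) (hp : p.Prime), p ∣ u₁ * u₂ →
      ¬ Sp p hp (𝓛 p hp) (Fstar p hp) (fun i => ((a i : ZMod p)))}

-- exponential sum E_ℛ(t; l)
def Esum {n l : ℕ} (R : Set (Fin n → ZMod l)) (t : Fin n → ℤ) : ℂ :=
  ∑ᶠ a ∈ R, Complex.exp (-(2 * Real.pi * Complex.I) *
    (∑ i, ((a i).val : ℂ) * (t i : ℂ)) / (l : ℂ))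

def Mplus {n : ℕ} (l : ℕ) (R : Set (Fin n → ZMod l)) (B : ℝ) : ℝ :=
  (3 * B) ^ n * R.ncard / (l : ℝ) ^ n

def Mpp {n : ℕ} (l : ℕ) (R : Set (Fin n → ZMod l)) (B : ℝ) : ℝ :=
  B ^ n / (l : ℝ) ^ n *
    ∑ᶠ t ∈ {t : Fin n → ℤ | t ≠ 0 ∧ ∀ i, |(t i : ℝ)| ≤ (l : ℝ) / B},
      ‖Esum R t‖

-- S(t; p)
def Ssum {n : ℕ} (p : ℕ) (hp : p.Prime) {τ : ℕ}
    (𝓛 : Fin τ → Fin n → @PadicInt p ⟨hp⟩) (t : Fin n → ℤ) : ℂ :=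
  ∑ i : Fin τ,
    ∑ᶠ a ∈ {a : Fin n → ZMod p | (∑ m, (@PadicInt.toZMod p ⟨hp⟩) (𝓛 i m) * a m) = 0},
      Complex.exp ((2 * Real.pi * Complex.I) *
        (∑ m, ((a m).val : ℂ) * (t m : ℂ)) / (p : ℂ))

-- |S(t; l)| for squarefree l
def SabsSF {n : ℕ} {τ : ∀ p : ℕ, p.Prime → ℕ}
    (𝓛 : ∀ (p : ℕ) (hp : p.Prime), Fin (τ p hp) → Fin n → @PadicInt p ⟨hp⟩)
    (l : ℕ) (t : Fin n → ℤ) : ℝ :=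
  ∏ p ∈ l.primeFactors.attach,
    ‖Ssum p.1 (Nat.prime_of_mem_primeFactors p.2)
      (𝓛 p.1 (Nat.prime_of_mem_primeFactors p.2)) t‖

-- admissible u₂'s
def U2set (ξ₁ ξ₂ ξ₃ : ℝ) : Set ℕ :=
  {u | 0 < u ∧ (u : ℝ) ≤ ξ₃ ∧ Squarefree u ∧
    ∀ p ∈ u.primeFactors, ξ₁ < (p : ℝ) ∧ (p : ℝ) ≤ ξ₂}


-- extra defs for theorems

/-- `N₄(B)` from Lemma N4B. -/
def N4sum {n : ℕ} (F : MvPolynomial (Fin n) ℤ)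
    {τ : ∀ p : ℕ, p.Prime → ℕ}
    (𝓛 : ∀ (p : ℕ) (hp : p.Prime), Fin (τ p hp) → Fin n → @PadicInt p ⟨hp⟩)
    (Fstar : ∀ (p : ℕ) (hp : p.Prime), MvPolynomial (Fin n) (@PadicInt p ⟨hp⟩))
    (k : ℕ) (C₁ : ℝ) (ξ₁ : ℝ → ℝ) (B : ℝ) : ℝ :=
  ∑ᶠ u₁ ∈ {u₁ : ℕ | u₁ ∣ Cxi k (ξ₁ B)},
    ∑ᶠ u₂ ∈ U2set (ξ₁ B) (xi2 n B) (xi3 C₁ k B),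
      Mplus (u₁ * u₂ * scrD k (ξ₁ B) B u₂)
        (Rset F 𝓛 Fstar k u₁ u₂ (scrD k (ξ₁ B) B u₂)) B /
        (k : ℝ) ^ (scrD k (ξ₁ B) B u₂).primeFactors.card

/-- the inner truncated sum `Σ'_{|tᵢ|≤Y} |S(t;u₂)|`. -/
def Ssumbox {n : ℕ} {τ : ∀ p : ℕ, p.Prime → ℕ}
    (𝓛 : ∀ (p : ℕ) (hp : p.Prime), Fin (τ p hp) → Fin n → @PadicInt p ⟨hp⟩)
    (u₂ : ℕ) (Y : ℝ) : ℝ :=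
  ∑ᶠ t ∈ {t : Fin n → ℤ | t ≠ 0 ∧ ∀ i, |(t i : ℝ)| ≤ Y}, SabsSF 𝓛 u₂ t

/-- `Q` restricted to a set of `u₂`'s. -/
def QUgen {n : ℕ} {τ : ∀ p : ℕ, p.Prime → ℕ}
    (𝓛 : ∀ (p : ℕ) (hp : p.Prime), Fin (τ p hp) → Fin n → @PadicInt p ⟨hp⟩)
    (S : Set ℕ) (B : ℝ) : ℝ :=
  ∑ᶠ u₂ ∈ S, (1 / (u₂ : ℝ) ^ n) *
    Ssumbox 𝓛 u₂ ((u₂ : ℝ) ^ ((9 : ℝ) / 10) / B ^ ((4 : ℝ) / 5))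

/-- `l* = ∏_{p ≤ Ξ, p | u₂} p`. -/
def lstar (u₂ : ℕ) (Ξ : ℝ) : ℕ :=
  ∏ᶠ p ∈ {p : ℕ | p.Prime ∧ p ∣ u₂ ∧ (p : ℝ) ≤ Ξ}, p

/-!
Two densities govern `N₄(B)`: that of `ℛ_l`, which is at most `∏_{p ∣ u₂} τ(p) / p`, where `τ(p)`
is the number of linear factors of `F` over `ℤ_p`, and the weight `k^{-ω(𝒟)}`.

For the first, restrict `F` to an integral line on which its `d` linear factors have distinct zeros.
As `F` is irreducible over `ℚ`, the restriction is, up to a constant, the minimal polynomial of an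
algebraic integer `θ`, so for large `p` the number `τ(p)` is at most the number of roots of that
polynomial modulo `p`, hence at most the number of ideals of norm `p` in the ring of integers of
`ℚ(θ)`. The linear growth of the number of ideals of norm at most `X` thus gives
`∑_{u ≤ X} ∏_{p ∣ u} τ(p) ≪ X`, the sum being over square-free `u` with large prime factors.

For the second, Mertens' theorem in arithmetic progressions gives `π(y; k, 1) ≫ y / log y`. Split
the sum over `u₂` according to `j = ⌊log (B² / u₂)⌋`, which is at least `log log B` because
`u₂ ≤ ξ₃`. A block contributes at most a power of `j + 1` times `k^{ξ₁ - π(j/12; k, 1)}`: the primes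
up to `j` dividing `u₂` are missing from `𝒟(u₂)`, but this costs only a power of `j + 1`. Summing
over `j` saves the factor `exp (-C₄ log₂ B / log₃ B)`.
-/

section MertensInProgressions

open Finset ArithmeticFunction
open ArithmeticFunction.vonMangoldt (residueClass residueClass_nonneg residueClass_le
  residueClass_apply summable_residueClass_non_primes_div)

theorem norm_sum_Ico_smul_le_of_antitoneOn {E : Type*} [SeminormedAddCommGroup E]
    [NormedSpace ℝ E] {c : ℕ → E} {a : ℕ → ℝ} {K : ℝ} {M N : ℕ}
    (hc : ∀ N, ‖∑ i ∈ range N, c i‖ ≤ K) (ha : AntitoneOn a (Set.Ici M))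
    (ha₀ : ∀ i, M ≤ i → 0 ≤ a i) (hN : M ≤ N) :
    ‖∑ i ∈ Ico M N, a i • c i‖ ≤ 2 * K * a M := by
  have abel : ‖∑ i ∈ Ico M N, a i • c i - a N • ∑ i ∈ range N, c i‖ ≤ K * (2 * a M - a N) := by
    induction N, hN using Nat.le_induction with
    | base =>
      simp only [Ico_self, sum_empty, zero_sub, norm_neg, norm_smul,
        Real.norm_of_nonneg (ha₀ M le_rfl)]
      nlinarith [hc M, ha₀ M le_rfl]
    | succ N hN ih =>
      have step : a (N + 1) ≤ a N := ha hN (hN.trans N.le_succ) N.le_succ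
      have split : ∑ i ∈ Ico M (N + 1), a i • c i - a (N + 1) • ∑ i ∈ range (N + 1), c i
          = (∑ i ∈ Ico M N, a i • c i - a N • ∑ i ∈ range N, c i)
            + (a N - a (N + 1)) • ∑ i ∈ range (N + 1), c i := by
        rw [sum_Ico_succ_top hN, sum_range_succ]
        module
      rw [split]
      refine (norm_add_le _ _).trans ?_
      rw [norm_smul, Real.norm_of_nonneg (sub_nonneg.2 step)]
      nlinarith [hc (N + 1)]
  have last : ‖a N • ∑ i ∈ range N, c i‖ ≤ K * a N := by
    rw [norm_smul, Real.norm_of_nonneg (ha₀ N hN), mul_comm]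
    exact mul_le_mul_of_nonneg_right (hc N) (ha₀ N hN)
  calc _ = ‖(∑ i ∈ Ico M N, a i • c i - a N • ∑ i ∈ range N, c i)
        + a N • ∑ i ∈ range N, c i‖ := by rw [sub_add_cancel]
    _ ≤ _ := (norm_add_le _ _).trans (by linarith)

theorem exists_norm_sum_range_smul_le_of_antitoneOn {E : Type*} [SeminormedAddCommGroup E]
    [NormedSpace ℝ E] {c : ℕ → E} {a : ℕ → ℝ} {K : ℝ} {M : ℕ}
    (hc : ∀ N, ‖∑ i ∈ range N, c i‖ ≤ K) (ha : AntitoneOn a (Set.Ici M))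
    (ha₀ : ∀ i, M ≤ i → 0 ≤ a i) :
    ∃ K' : ℝ, ∀ N, ‖∑ i ∈ range N, a i • c i‖ ≤ K' := by
  have hK : 0 ≤ K := (norm_nonneg _).trans (hc 0)
  refine ⟨∑ i ∈ range M, ‖a i • c i‖ + 2 * K * a M, fun N => ?_⟩
  rcases le_total N M with hNM | hMN
  · calc _ ≤ ∑ i ∈ range N, ‖a i • c i‖ := norm_sum_le _ _
      _ ≤ ∑ i ∈ range M, ‖a i • c i‖ :=
        sum_le_sum_of_subset_of_nonneg (range_mono hNM) fun _ _ _ => norm_nonneg _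
      _ ≤ _ := le_add_of_nonneg_right (mul_nonneg (by positivity) (ha₀ M le_rfl))
  · rw [← sum_range_add_sum_Ico _ hMN]
    exact (norm_add_le _ _).trans
      (add_le_add (norm_sum_le _ _) (norm_sum_Ico_smul_le_of_antitoneOn hc ha ha₀ hMN))

theorem sum_range_succ_eq_sum_Ioc_of_zero {M : Type*} [AddCommMonoid M] {f : ℕ → M}
    (hf : f 0 = 0) (N : ℕ) : ∑ i ∈ range (N + 1), f i = ∑ i ∈ Ioc 0 N, f i := by
  rw [sum_range_eq_add_Ico _ N.succ_pos, hf, zero_add]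
  rfl

theorem sum_vonMangoldt_le (N : ℕ) : ∑ m ∈ Ioc 0 N, Λ m ≤ (Real.log 4 + 4) * N := by
  simpa only [Chebyshev.psi, Nat.floor_natCast] using
    Chebyshev.psi_le_const_mul_self (x := N) N.cast_nonneg

theorem sum_vonMangoldt_mul_div_eq_log_factorial (N : ℕ) :
    ∑ m ∈ Ioc 0 N, Λ m * ((N / m : ℕ) : ℝ) = Real.log N.factorial := by
  rw [← sum_Ioc_mul_zeta_eq_sum, vonMangoldt_mul_zeta, ← prod_range_add_one_eq_factorial,
    Nat.cast_prod, Real.log_prod fun i _ => by positivity, range_eq_Ico,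
    sum_Ico_add' (fun i : ℕ => Real.log i) 0 N 1]
  rfl

theorem abs_log_factorial_sub_le (N : ℕ) : |Real.log N.factorial - N * Real.log N| ≤ N := by
  have hN : (0 : ℝ) ≤ N := N.cast_nonneg
  have upper : Real.log N.factorial ≤ N * Real.log N := by
    rw [← Real.log_pow]
    exact Real.log_le_log (by positivity) (mod_cast N.factorial_le_pow)
  have lower : N * Real.log N - N ≤ Real.log N.factorial := by
    rcases N.eq_zero_or_pos with rfl | hpos
    · simp
    have h := Real.log_le_log (by positivity) (Real.pow_div_factorial_le_exp (x := N) hN N)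
    rw [Real.log_exp, Real.log_div (by positivity) (by positivity), Real.log_pow] at h
    linarith
  exact abs_le.2 ⟨by linarith, by linarith⟩

theorem abs_log_factorial_sub_mul_sum_vonMangoldt_div_le (N : ℕ) :
    |Real.log N.factorial - N * ∑ m ∈ Ioc 0 N, Λ m / m| ≤ (Real.log 4 + 4) * N := by
  rw [← sum_vonMangoldt_mul_div_eq_log_factorial, mul_sum, ← sum_sub_distrib]
  refine (abs_sum_le_sum_abs _ _).trans ((sum_le_sum fun m _ => ?_).trans (sum_vonMangoldt_le N))
  have floor_le : ((N / m : ℕ) : ℝ) ≤ N / m := Nat.cast_div_le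
  have le_floor : (N : ℝ) / m ≤ ((N / m : ℕ) : ℝ) + 1 := by
    rw [← Nat.floor_div_eq_div (K := ℝ)]
    exact (Nat.lt_floor_add_one _).le
  calc |Λ m * ((N / m : ℕ) : ℝ) - N * (Λ m / m)|
      = Λ m * |((N / m : ℕ) : ℝ) - N / m| := by
        rw [mul_div_left_comm, ← mul_sub, abs_mul, abs_of_nonneg vonMangoldt_nonneg]
    _ ≤ Λ m * 1 := mul_le_mul_of_nonneg_left (abs_le.2 ⟨by linarith, by linarith⟩)
        vonMangoldt_nonneg
    _ = Λ m := mul_one _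

theorem abs_sum_vonMangoldt_div_sub_log_le (N : ℕ) :
    |∑ m ∈ Ioc 0 N, Λ m / m - Real.log N| ≤ Real.log 4 + 5 := by
  have : 0 ≤ Real.log 4 := Real.log_nonneg (by norm_num)
  rcases N.eq_zero_or_pos with rfl | hN
  · simpa using by positivity
  have hN₀ : (0 : ℝ) < N := mod_cast hN
  refine le_of_mul_le_mul_left ?_ hN₀
  calc N * |∑ m ∈ Ioc 0 N, Λ m / m - Real.log N|
      = |(Real.log N.factorial - N * Real.log N)
          - (Real.log N.factorial - N * ∑ m ∈ Ioc 0 N, Λ m / m)| := by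
        rw [sub_sub_sub_cancel_left, ← mul_sub, abs_mul, abs_of_pos hN₀]
    _ ≤ N + (Real.log 4 + 4) * N := (abs_sub _ _).trans
        (add_le_add (abs_log_factorial_sub_le N)
          (abs_log_factorial_sub_mul_sum_vonMangoldt_div_le N))
    _ = N * (Real.log 4 + 5) := by ring

theorem exists_sum_vonMangoldt_nonprime_div_le :
    ∃ K : ℝ, ∀ s : Finset ℕ, ∑ n ∈ s with ¬ n.Prime, Λ n / n ≤ K := by
  have hΛ : ∀ n, residueClass (0 : ZMod 1) n = Λ n := fun n =>
    Set.indicator_of_mem (s := {n : ℕ | (n : ZMod 1) = 0}) (Subsingleton.elim _ _) _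
  have hsum := summable_residueClass_non_primes_div (0 : ZMod 1)
  simp only [hΛ] at hsum
  refine ⟨_, fun s => le_trans (le_of_eq ?_) (hsum.sum_le_tsum s fun n _ => ?_)⟩
  · simp only [sum_filter, ite_not, ite_div, zero_div]
  · split_ifs
    · simp
    · exact div_nonneg vonMangoldt_nonneg n.cast_nonneg

section Character

variable {k : ℕ} [NeZero k] {χ : DirichletCharacter ℂ k}

theorem sum_range_dirichletCharacter_eq_zero (hχ : χ ≠ 1) :
    ∑ i ∈ range k, χ (i : ZMod k) = 0 := by
  rw [← MulChar.sum_eq_zero_of_ne_one hχ]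
  refine sum_bij' (fun i _ => (i : ZMod k)) (fun z _ => z.val) (fun _ _ => mem_univ _)
    (fun z _ => mem_range.2 z.val_lt) (fun i hi => ZMod.val_cast_of_lt (mem_range.1 hi))
    (fun z _ => ZMod.natCast_zmod_val z) fun _ _ => rfl

theorem norm_sum_range_dirichletCharacter_le (hχ : χ ≠ 1) (N : ℕ) :
    ‖∑ i ∈ range N, χ (i : ZMod k)‖ ≤ k := by
  induction N using Nat.strong_induction_on with
  | _ N ih =>
    rcases lt_or_ge N k with hN | hN
    · refine (norm_sum_le _ _).trans ((sum_le_sum fun i _ => χ.norm_le_one _).trans ?_)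
      simpa using hN.le
    · obtain ⟨m, rfl⟩ := Nat.exists_eq_add_of_le hN
      rw [sum_range_add, sum_range_dirichletCharacter_eq_zero hχ, zero_add]
      simpa using ih m (Nat.lt_add_of_pos_left (NeZero.pos k))

theorem norm_sum_Ico_term_le (hχ : χ ≠ 1) {s : ℝ} (hs : 1 ≤ s) {M N : ℕ} (hM : 1 ≤ M)
    (hMN : M ≤ N) : ‖∑ j ∈ Ico M N, LSeries.term (fun n => χ n) s j‖ ≤ 2 * k / M := by
  have term_eq : ∀ j ∈ Ico M N,
      LSeries.term (fun n => χ n) s j = (j : ℝ) ^ (-s) • χ (j : ZMod k) := by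
    intro j hj
    have hj₀ : j ≠ 0 := by have := (mem_Ico.1 hj).1; omega
    rw [LSeries.term_of_ne_zero hj₀, Complex.real_smul, Complex.ofReal_cpow j.cast_nonneg]
    push_cast
    rw [Complex.cpow_neg, div_eq_inv_mul]
  have anti : AntitoneOn (fun j : ℕ => (j : ℝ) ^ (-s)) (Set.Ici M) := by
    intro i hi j _ hij
    have hi₀ : (0 : ℝ) < i := mod_cast hM.trans hi
    exact Real.rpow_le_rpow_of_nonpos hi₀ (mod_cast hij) (by linarith)
  have weight_le : (M : ℝ) ^ (-s) ≤ (M : ℝ)⁻¹ := by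
    rw [← Real.rpow_neg_one]
    exact Real.rpow_le_rpow_of_exponent_le (mod_cast hM) (by linarith)
  rw [sum_congr rfl term_eq]
  refine (norm_sum_Ico_smul_le_of_antitoneOn (norm_sum_range_dirichletCharacter_le hχ) anti
    (fun _ _ => by positivity) hMN).trans ?_
  rw [div_eq_mul_inv]
  gcongr

theorem norm_sum_range_term_sub_LFunction_le (hχ : χ ≠ 1) {s : ℝ} (hs : 1 < s) {N : ℕ}
    (hN : 1 ≤ N) :
    ‖∑ j ∈ range N, LSeries.term (fun n => χ n) s j - DirichletCharacter.LFunction χ s‖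
      ≤ 2 * k / N := by
  have hs' : 1 < (s : ℂ).re := by simpa using hs
  have htend := (DirichletCharacter.LSeriesSummable_of_one_lt_re χ hs').hasSum.tendsto_sum_nat
  rw [DirichletCharacter.LFunction_eq_LSeries χ hs']
  refine le_of_tendsto' (tendsto_const_nhds.sub ((tendsto_add_atTop_iff_nat N).2 htend)).norm
    fun M => ?_
  rw [norm_sub_rev, ← sum_Ico_eq_sub _ (Nat.le_add_left N M)]
  exact norm_sum_Ico_term_le hχ hs.le hN (Nat.le_add_left N M)

theorem norm_sum_Ioc_div_sub_LFunction_one_le (hχ : χ ≠ 1) (N : ℕ) :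
    ‖∑ j ∈ Ioc 0 N, χ (j : ZMod k) / j - DirichletCharacter.LFunction χ 1‖
      ≤ 2 * k / (N + 1) := by
  have tendsto_one {f : ℝ → ℂ} (hf : Continuous f) :
      Tendsto f (nhdsWithin 1 (Set.Ioi 1)) (nhds (f 1)) :=
    (hf.tendsto 1).mono_left nhdsWithin_le_nhds
  have cont_term : Continuous fun s : ℝ =>
      ∑ j ∈ range (N + 1), LSeries.term (fun n => χ n) s j := by
    refine continuous_finsetSum _ fun j _ => ?_
    rcases eq_or_ne j 0 with rfl | hj
    · simpa using continuous_const
    · have hj' : (j : ℂ) ≠ 0 := mod_cast hj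
      simp only [LSeries.term_of_ne_zero hj]
      exact continuous_const.div (Complex.continuous_ofReal.const_cpow (Or.inl hj'))
        fun s => by simp [hj]
  have cont_L : Continuous fun s : ℝ => DirichletCharacter.LFunction χ s :=
    (DirichletCharacter.differentiable_LFunction hχ).continuous.comp Complex.continuous_ofReal
  have bound := le_of_tendsto (tendsto_one (cont_term.sub cont_L)).norm
    (eventually_nhdsWithin_of_forall fun s hs =>
      norm_sum_range_term_sub_LFunction_le hχ hs N.succ_pos)
  have term_eq : ∀ j ∈ Ioc 0 N, LSeries.term (fun n => χ n) 1 j = χ (j : ZMod k) / j :=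
    fun j hj => by simp [LSeries.term_of_ne_zero (mem_Ioc.1 hj).1.ne']
  simpa only [Pi.sub_apply, sum_range_succ_eq_sum_Ioc_of_zero (LSeries.term_zero _ _),
    Complex.ofReal_one, sum_congr rfl term_eq, Nat.cast_add, Nat.cast_one] using bound

theorem exists_norm_sum_log_div_le (hχ : χ ≠ 1) :
    ∃ K : ℝ, ∀ N : ℕ, ‖∑ n ∈ Ioc 0 N, χ (n : ZMod k) * Real.log n / n‖ ≤ K := by
  have anti : AntitoneOn (fun n : ℕ => Real.log n / n) (Set.Ici 3) := by
    have exp_le {n : ℕ} (hn : 3 ≤ n) : Real.exp 1 ≤ n :=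
      Real.exp_one_lt_three.le.trans (mod_cast hn)
    exact fun i hi j hj hij =>
      Real.log_div_self_antitoneOn (exp_le hi) (exp_le hj) (mod_cast hij)
  obtain ⟨K, hK⟩ := exists_norm_sum_range_smul_le_of_antitoneOn
    (norm_sum_range_dirichletCharacter_le hχ) anti
    fun i _ => div_nonneg (Real.log_natCast_nonneg i) i.cast_nonneg
  refine ⟨K, fun N => ?_⟩
  have term_eq (n : ℕ) : (Real.log n / n) • χ (n : ZMod k) = χ (n : ZMod k) * Real.log n / n := by
    rw [Complex.real_smul]
    push_cast
    ring
  simpa only [term_eq, sum_range_succ_eq_sum_Ioc_of_zero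
    (f := fun n : ℕ => χ (n : ZMod k) * Real.log n / n) (by simp)] using hK (N + 1)

omit [NeZero k] in
theorem sum_log_div_eq_sum_vonMangoldt (χ : DirichletCharacter ℂ k) (N : ℕ) :
    ∑ n ∈ Ioc 0 N, χ (n : ZMod k) * Real.log n / n
      = ∑ m ∈ Ioc 0 N, χ (m : ZMod k) * Λ m / m *
          ∑ j ∈ Ioc 0 (N / m), χ (j : ZMod k) / j := by
  let f : ArithmeticFunction ℂ := ⟨fun m => χ (m : ZMod k) * Λ m / m, by simp⟩
  let g : ArithmeticFunction ℂ := ⟨fun j => χ (j : ZMod k) / j, by simp⟩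
  have convolution : ∀ n ∈ Ioc 0 N, (f * g) n = χ (n : ZMod k) * Real.log n / n := by
    intro n hn
    rw [ArithmeticFunction.mul_apply, ← vonMangoldt_sum,
      ← Nat.sum_divisorsAntidiagonal (f := fun i _ => Λ i), Complex.ofReal_sum, mul_sum, sum_div]
    refine sum_congr rfl fun x hx => ?_
    obtain ⟨rfl, hn₀⟩ := Nat.mem_divisorsAntidiagonal.1 hx
    have h₁ : (x.1 : ℂ) ≠ 0 := mod_cast left_ne_zero_of_mul hn₀
    have h₂ : (x.2 : ℂ) ≠ 0 := mod_cast right_ne_zero_of_mul hn₀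
    change χ (x.1 : ZMod k) * Λ x.1 / x.1 * (χ (x.2 : ZMod k) / x.2) = _
    push_cast
    rw [map_mul]
    field_simp
  rw [← sum_congr rfl convolution, sum_Ioc_mul_eq_sum_sum]
  rfl

theorem norm_sum_vonMangoldt_mul_tail_le (hχ : χ ≠ 1) (N : ℕ) :
    ‖∑ m ∈ Ioc 0 N, χ (m : ZMod k) * Λ m / m *
        (∑ j ∈ Ioc 0 (N / m), χ (j : ZMod k) / j - DirichletCharacter.LFunction χ 1)‖
      ≤ 2 * k * (Real.log 4 + 4) := by
  have term_le : ∀ m ∈ Ioc 0 N, ‖χ (m : ZMod k) * Λ m / m *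
      (∑ j ∈ Ioc 0 (N / m), χ (j : ZMod k) / j - DirichletCharacter.LFunction χ 1)‖
        ≤ Λ m * (2 * k / N) := by
    intro m hm
    obtain ⟨hm₀, hmN⟩ := mem_Ioc.1 hm
    have : (0 : ℝ) < m := mod_cast hm₀
    have hN : (0 : ℝ) < N := mod_cast hm₀.trans_le hmN
    have hdiv : (N : ℝ) ≤ m * ((N / m : ℕ) + 1) := mod_cast (Nat.lt_mul_div_succ N hm₀).le
    rw [norm_mul, norm_div, norm_mul, Complex.norm_real,
      Real.norm_of_nonneg vonMangoldt_nonneg, Complex.norm_natCast]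
    calc _ ≤ 1 * Λ m / m * (2 * k / ((N / m : ℕ) + 1)) := by
          gcongr
          · exact χ.norm_le_one _
          · exact norm_sum_Ioc_div_sub_LFunction_one_le hχ (N / m)
      _ = Λ m * (2 * k / (m * ((N / m : ℕ) + 1))) := by field_simp
      _ ≤ Λ m * (2 * k / N) := by gcongr
  calc _ ≤ ∑ m ∈ Ioc 0 N, Λ m * (2 * k / N) := norm_sum_le_of_le _ term_le
    _ = (∑ m ∈ Ioc 0 N, Λ m) * (2 * k / N) := by rw [sum_mul]
    _ ≤ (Real.log 4 + 4) * N * (2 * k / N) := by gcongr; exact sum_vonMangoldt_le N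
    _ = 2 * k * (Real.log 4 + 4) * (N / N) := by ring
    _ ≤ 2 * k * (Real.log 4 + 4) := by
        have : 0 ≤ Real.log 4 := Real.log_nonneg (by norm_num)
        exact mul_le_of_le_one_right (by positivity) (div_self_le_one _)

theorem exists_norm_sum_vonMangoldt_char_div_le (hχ : χ ≠ 1) :
    ∃ K : ℝ, ∀ N : ℕ, ‖∑ m ∈ Ioc 0 N, χ (m : ZMod k) * Λ m / m‖ ≤ K := by
  obtain ⟨K, hK⟩ := exists_norm_sum_log_div_le hχ
  set L := DirichletCharacter.LFunction χ 1
  have hL : L ≠ 0 := DirichletCharacter.LFunction_apply_one_ne_zero hχ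
  refine ⟨(K + 2 * k * (Real.log 4 + 4)) / ‖L‖, fun N => ?_⟩
  have split : (∑ m ∈ Ioc 0 N, χ (m : ZMod k) * Λ m / m) * L
      = ∑ n ∈ Ioc 0 N, χ (n : ZMod k) * Real.log n / n
        - ∑ m ∈ Ioc 0 N, χ (m : ZMod k) * Λ m / m *
          (∑ j ∈ Ioc 0 (N / m), χ (j : ZMod k) / j - L) := by
    rw [sum_log_div_eq_sum_vonMangoldt, ← sum_sub_distrib, sum_mul]
    exact sum_congr rfl fun m _ => by ring
  rw [le_div_iff₀ (norm_pos_iff.2 hL), ← norm_mul, split]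
  exact (norm_sub_le _ _).trans (add_le_add (hK N) (norm_sum_vonMangoldt_mul_tail_le hχ N))

end Character

theorem exists_sum_vonMangoldt_not_isUnit_div_le (k : ℕ) [NeZero k] :
    ∃ K : ℝ, ∀ s : Finset ℕ, ∑ m ∈ s with ¬ IsUnit ((m : ℕ) : ZMod k), Λ m / m ≤ K := by
  obtain ⟨K, hK⟩ := exists_sum_vonMangoldt_nonprime_div_le
  have nonneg (m : ℕ) : 0 ≤ Λ m / m := div_nonneg vonMangoldt_nonneg m.cast_nonneg
  refine ⟨K + ∑ p ∈ k.primeFactors, Λ p / p, fun s => ?_⟩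
  have subset : {m ∈ s | ¬ IsUnit ((m : ℕ) : ZMod k)} ⊆ {m ∈ s | ¬ m.Prime} ∪ k.primeFactors := by
    intro m hm
    rw [mem_filter, ZMod.isUnit_iff_coprime] at hm
    rw [mem_union, mem_filter]
    by_cases hp : m.Prime
    · exact Or.inr (Nat.mem_primeFactors.2
        ⟨hp, not_not.1 (mt hp.coprime_iff_not_dvd.2 hm.2), NeZero.ne k⟩)
    · exact Or.inl ⟨hm.1, hp⟩
  calc _ ≤ ∑ m ∈ {m ∈ s | ¬ m.Prime} ∪ k.primeFactors, Λ m / m :=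
        sum_le_sum_of_subset_of_nonneg subset fun m _ _ => nonneg m
    _ ≤ ∑ m ∈ s with ¬ m.Prime, Λ m / m + ∑ p ∈ k.primeFactors, Λ p / p := by
        rw [← sum_union_inter]
        exact le_add_of_nonneg_right (sum_nonneg fun m _ => nonneg m)
    _ ≤ _ := by gcongr; exact hK s

theorem exists_norm_sum_vonMangoldt_one_div_sub_log_le (k : ℕ) [NeZero k] :
    ∃ K : ℝ, ∀ N : ℕ,
      ‖∑ m ∈ Ioc 0 N, (1 : DirichletCharacter ℂ k) (m : ZMod k) * Λ m / m - Real.log N‖ ≤ K := by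
  obtain ⟨K, hK⟩ := exists_sum_vonMangoldt_not_isUnit_div_le k
  refine ⟨Real.log 4 + 5 + K, fun N => ?_⟩
  have split : ∑ m ∈ Ioc 0 N, (1 : DirichletCharacter ℂ k) (m : ZMod k) * Λ m / m - Real.log N
      = ((∑ m ∈ Ioc 0 N, Λ m / m - Real.log N : ℝ) : ℂ)
        - ((∑ m ∈ Ioc 0 N with ¬ IsUnit ((m : ℕ) : ZMod k), Λ m / m : ℝ) : ℂ) := by
    rw [Complex.ofReal_sub, sub_right_comm, sum_filter, ← Complex.ofReal_sub,
      ← sum_sub_distrib, Complex.ofReal_sum]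
    refine congrArg (· - (Real.log N : ℂ)) (sum_congr rfl fun m _ => ?_)
    by_cases hm : IsUnit (m : ZMod k)
    · simp [hm, MulChar.one_apply hm]
    · simp [hm, MulChar.map_nonunit]
  rw [split]
  refine (norm_sub_le _ _).trans ?_
  rw [Complex.norm_real, Complex.norm_real, Real.norm_of_nonneg
    (sum_nonneg fun m _ => div_nonneg vonMangoldt_nonneg m.cast_nonneg)]
  exact add_le_add (abs_sum_vonMangoldt_div_sub_log_le N) (hK _)

section ResidueClass

variable {k : ℕ} [NeZero k] {a : ZMod k}

theorem exists_abs_sum_residueClass_div_sub_le (ha : IsUnit a) :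
    ∃ K : ℝ, ∀ N : ℕ, |∑ n ∈ Ioc 0 N, residueClass a n / n - Real.log N / k.totient| ≤ K := by
  classical
  have mertens (χ : DirichletCharacter ℂ k) : ∃ K : ℝ, ∀ N : ℕ,
      ‖∑ m ∈ Ioc 0 N, χ (m : ZMod k) * Λ m / m
        - if χ = 1 then (Real.log N : ℂ) else 0‖ ≤ K := by
    rcases eq_or_ne χ 1 with rfl | hχ
    · simpa using exists_norm_sum_vonMangoldt_one_div_sub_log_le k
    · simpa [hχ] using exists_norm_sum_vonMangoldt_char_div_le hχ
  choose K hK using mertens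
  refine ⟨(k.totient : ℝ)⁻¹ * ∑ χ, K χ, fun N => ?_⟩
  have orthogonality : ((∑ n ∈ Ioc 0 N, residueClass a n / n - Real.log N / k.totient : ℝ) : ℂ)
      = (k.totient : ℂ)⁻¹ * ∑ χ : DirichletCharacter ℂ k, χ a⁻¹ *
        (∑ m ∈ Ioc 0 N, χ (m : ZMod k) * Λ m / m - if χ = 1 then (Real.log N : ℂ) else 0) := by
    have hlog : ∑ χ : DirichletCharacter ℂ k,
        χ a⁻¹ * (if χ = 1 then (Real.log N : ℂ) else 0) = Real.log N := by
      have ha' : IsUnit a⁻¹ := IsUnit.of_mul_eq_one a (ZMod.inv_mul_of_unit a ha)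
      simp only [mul_ite, mul_zero, sum_ite_eq', mem_univ, if_true, MulChar.one_apply ha', one_mul]
    simp only [mul_sub, sum_sub_distrib, hlog]
    push_cast
    congr 1
    · simp only [mul_sum]
      rw [sum_comm]
      refine sum_congr rfl fun n _ => ?_
      rw [residueClass_apply ha, mul_sum, sum_div]
      exact sum_congr rfl fun χ _ => by ring
    · ring
  rw [← Real.norm_eq_abs, ← Complex.norm_real, orthogonality, norm_mul, norm_inv,
    Complex.norm_natCast]
  gcongr
  refine norm_sum_le_of_le _ fun χ _ => ?_
  rw [norm_mul]
  exact (mul_le_of_le_one_left (norm_nonneg _) (χ.norm_le_one _)).trans (hK χ N)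

theorem exists_abs_sum_log_div_primes_sub_le (ha : IsUnit a) :
    ∃ K : ℝ, ∀ N : ℕ,
      |∑ p ∈ Ioc 0 N with p.Prime ∧ ((p : ℕ) : ZMod k) = a, Real.log p / p
        - Real.log N / k.totient| ≤ K := by
  obtain ⟨K, hK⟩ := exists_abs_sum_residueClass_div_sub_le ha
  obtain ⟨K', hK'⟩ := exists_sum_vonMangoldt_nonprime_div_le
  refine ⟨K + K', fun N => ?_⟩
  have split : ∑ n ∈ Ioc 0 N, residueClass a n / n
      = ∑ p ∈ Ioc 0 N with p.Prime ∧ ((p : ℕ) : ZMod k) = a, Real.log p / p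
        + ∑ n ∈ Ioc 0 N with ¬ n.Prime, residueClass a n / n := by
    rw [← sum_filter_add_sum_filter_not _ Nat.Prime, ← filter_filter,
      sum_filter (s := filter Nat.Prime _)]
    congr 1
    refine sum_congr rfl fun p hp => ?_
    by_cases h : (p : ZMod k) = a
    · simp [residueClass, h, vonMangoldt_apply_prime (mem_filter.1 hp).2]
    · simp [residueClass, h]
  have powers_nonneg : 0 ≤ ∑ n ∈ Ioc 0 N with ¬ n.Prime, residueClass a n / n :=
    sum_nonneg fun n _ => div_nonneg (residueClass_nonneg a n) n.cast_nonneg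
  have powers_le : ∑ n ∈ Ioc 0 N with ¬ n.Prime, residueClass a n / n ≤ K' :=
    (sum_le_sum fun n _ => div_le_div_of_nonneg_right (residueClass_le a n)
      n.cast_nonneg).trans (hK' _)
  have h := abs_le.1 (hK N)
  rw [split] at h
  exact abs_le.2 ⟨by linarith, by linarith⟩

theorem exists_one_le_sum_log_div_primes_Ioc (ha : IsUnit a) :
    ∃ A : ℕ, 1 ≤ A ∧ ∀ N : ℕ, 1 ≤ N →
      1 ≤ ∑ p ∈ Ioc N (A * N) with p.Prime ∧ ((p : ℕ) : ZMod k) = a, Real.log p / p := by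
  have hφ : (0 : ℝ) < k.totient := mod_cast Nat.totient_pos.2 (NeZero.pos k)
  obtain ⟨K, hK⟩ := exists_abs_sum_log_div_primes_sub_le ha
  obtain ⟨A, hA⟩ := exists_nat_gt (Real.exp ((2 * K + 1) * k.totient))
  have hA₀ : (0 : ℝ) < A := (Real.exp_pos _).trans hA
  have hA₁ : 1 ≤ A := mod_cast hA₀
  have hlogA : 2 * K + 1 ≤ Real.log A / k.totient := by
    rw [le_div_iff₀ hφ, Real.le_log_iff_exp_le hA₀]
    exact hA.le
  refine ⟨A, hA₁, fun N hN => ?_⟩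
  have hN₀ : (0 : ℝ) < N := mod_cast hN
  have small := abs_le.1 (hK N)
  have large := abs_le.1 (hK (A * N))
  have split := sum_Ioc_consecutive
    (fun p : ℕ => if p.Prime ∧ (p : ZMod k) = a then Real.log p / p else 0)
    N.zero_le (Nat.le_mul_of_pos_left N hA₁)
  simp only [← sum_filter] at split
  rw [Nat.cast_mul, Real.log_mul hA₀.ne' hN₀.ne', add_div] at large
  linarith

theorem exists_mul_div_log_le_card_primes (ha : IsUnit a) :
    ∃ c : ℝ, 0 < c ∧ ∀ᶠ y : ℝ in atTop,
      c * (y / Real.log y) ≤ #{p ∈ Ioc 0 ⌊y⌋₊ | p.Prime ∧ ((p : ℕ) : ZMod k) = a} := by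
  obtain ⟨A, hA, hsum⟩ := exists_one_le_sum_log_div_primes_Ioc ha
  have hA₀ : (0 : ℝ) < A := mod_cast hA
  refine ⟨1 / (2 * A), by positivity, ?_⟩
  filter_upwards [eventually_ge_atTop (2 * A + 2 : ℝ)] with y hy
  have hlogy : 0 < Real.log y := Real.log_pos (by linarith)
  set N := ⌊y / A⌋₊
  have hyA : 2 ≤ y / A := by rw [le_div_iff₀ hA₀]; linarith
  have hN : 1 ≤ N := Nat.le_floor (by push_cast; linarith)
  have hN₀ : (0 : ℝ) < N := mod_cast hN
  have hNy : y / A < N + 1 := Nat.lt_floor_add_one _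
  have hAN : A * N ≤ ⌊y⌋₊ := Nat.le_floor <| by
    have := (le_div_iff₀ hA₀).1 (Nat.floor_le (by linarith) : (N : ℝ) ≤ y / A)
    push_cast
    linarith
  set S := {p ∈ Ioc N (A * N) | p.Prime ∧ ((p : ℕ) : ZMod k) = a}
  have term_le : ∀ p ∈ S, Real.log p / p ≤ Real.log y / N := by
    intro p hp
    obtain ⟨hNp, hpA⟩ := mem_Ioc.1 (mem_filter.1 hp).1
    have hp₀ : (0 : ℝ) < p := mod_cast hN.trans hNp.le
    have hpy : (p : ℝ) ≤ y :=
      (Nat.cast_le.2 (hpA.trans hAN)).trans (Nat.floor_le (by linarith))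
    gcongr
  have card_ge : N / Real.log y ≤ #S := by
    have h := (hsum N hN).trans (sum_le_card_nsmul S _ _ term_le)
    rw [nsmul_eq_mul, ← mul_div_assoc, le_div_iff₀ hN₀, one_mul] at h
    rwa [div_le_iff₀ hlogy]
  calc 1 / (2 * A) * (y / Real.log y) = y / A / 2 / Real.log y := by field_simp
    _ ≤ N / Real.log y := by gcongr; linarith
    _ ≤ #S := card_ge
    _ ≤ _ := mod_cast card_le_card (filter_subset_filter _ (Ioc_subset_Ioc N.zero_le hAN))

end ResidueClass

end MertensInProgressions

section LinearForms

variable {R S E : Type*} [CommRing R] [CommRing S] [Field E] {n : ℕ}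

theorem eval_linForm (c x : Fin n → R) : eval x (linForm c) = c ⬝ᵥ x := by
  simp [linForm, dotProduct]

theorem map_linForm (φ : R →+* S) (c : Fin n → R) : (linForm c).map φ = linForm (φ ∘ c) := by
  simp [linForm]

theorem linForm_smul (r : R) (c : Fin n → R) : linForm (r • c) = C r * linForm c := by
  simp [linForm, Finset.mul_sum, mul_assoc]

theorem coeff_linForm (c : Fin n → R) (i : Fin n) :
    coeff (Finsupp.single i 1) (linForm c) = c i := by
  simp [linForm, coeff_sum, coeff_C_mul, coeff_X, Finsupp.single_left_inj]

theorem linForm_injective : Function.Injective (linForm : (Fin n → R) → MvPolynomial (Fin n) R) :=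
  fun c c' h => funext fun i => by rw [← coeff_linForm c i, h, coeff_linForm]

theorem linForm_zero : linForm (0 : Fin n → R) = 0 := by
  simp [linForm]

theorem linForm_ne_zero {c : Fin n → R} (hc : c ≠ 0) : linForm c ≠ 0 :=
  linForm_zero (R := R) ▸ linForm_injective.ne hc

theorem isHomogeneous_linForm (c : Fin n → R) : (linForm c).IsHomogeneous 1 :=
  IsHomogeneous.sum _ _ _ fun i _ => isHomogeneous_C_mul_X (c i) i

theorem prime_linForm {c : Fin n → E} (hc : c ≠ 0) : Prime (linForm c) := by
  refine (irreducible_of_totalDegree_eq_one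
    ((isHomogeneous_linForm c).totalDegree (linForm_ne_zero hc)) fun x hx => ?_).prime
  obtain ⟨i, hi⟩ := Function.ne_iff.1 hc
  exact IsUnit.mk0 x (ne_zero_of_dvd_ne_zero hi (coeff_linForm c i ▸ hx (Finsupp.single i 1)))

theorem eq_of_linForm_dvd_linForm {c c' a : Fin n → E} (hc : c ⬝ᵥ a = 1) (hc' : c' ⬝ᵥ a = 1)
    (h : linForm c ∣ linForm c') : c = c' := by
  have hne : ∀ {e : Fin n → E}, e ⬝ᵥ a = 1 → e ≠ 0 := by
    rintro e he rfl
    simp at he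
  obtain ⟨u, hu⟩ := (prime_linForm (hne hc)).associated_of_dvd (prime_linForm (hne hc')) h
  obtain ⟨r, -, hr⟩ := isUnit_iff_eq_C_of_isReduced.1 u.isUnit
  rw [hr] at hu
  have hr1 := congrArg (eval a) hu
  rw [map_mul, eval_linForm, eval_linForm, hc, hc', eval_C, one_mul] at hr1
  rw [hr1, C_1, mul_one] at hu
  exact linForm_injective hu

theorem linearIndependent_pair_of_discProd_ne_zero {d : ℕ} (hn : 2 ≤ n) (hd : n ≤ d)
    {L : Fin d → Fin n → ℂ} (hΔ : discProd L ≠ 0) {i j : Fin d} (hij : i ≠ j) :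
    LinearIndependent ℂ ![L i, L j] := by
  obtain ⟨s, hs, hcard⟩ : ∃ s : Finset (Fin d), {i, j} ⊆ s ∧ s.card = n :=
    Finset.exists_superset_card_eq (by rwa [Finset.card_pair hij]) (by simpa using hd)
  let g := s.orderEmbOfFin hcard
  have hdet : Matrix.det (Matrix.of fun i j => L (g i) j) ≠ 0 := by
    intro h0
    apply hΔ
    rw [discProd, finprod_mem_eq_finite_toFinset_prod _ (Set.toFinite _)]
    exact Finset.prod_eq_zero ((Set.Finite.mem_toFinset _).2 g.strictMono) (by simpa using h0)
  have hmem : ∀ {l}, l ∈ s → ∃ l', g l' = l := fun hl => by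
    rwa [← Set.mem_range, Finset.range_orderEmbOfFin]
  obtain ⟨i', rfl⟩ := hmem (hs (Finset.mem_insert_self i {j}))
  obtain ⟨j', rfl⟩ := hmem (hs (Finset.mem_insert_of_mem (Finset.mem_singleton_self j)))
  have hinj : Function.Injective ![i', j'] := by
    rw [injective_pair_iff_ne]
    exact fun h => hij (by rw [h])
  have hpair : ![L (g i'), L (g j')] = (fun l => L (g l)) ∘ ![i', j'] := by
    ext l m
    fin_cases l <;> rfl
  rw [hpair]
  exact (Matrix.linearIndependent_rows_of_det_ne_zero hdet).comp _ hinj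

end LinearForms

section Lines

variable {E : Type*} [Field E] [CharZero E] {n : ℕ} {ι : Type*} [Finite ι]

theorem exists_int_eval_ne_zero {P : MvPolynomial (Fin n) E} (hP : P ≠ 0) :
    ∃ x : Fin n → ℤ, eval (Int.cast ∘ x) P ≠ 0 := by
  by_contra! h
  refine hP (funext_set (fun _ => Set.range ((↑) : ℤ → E))
    (fun _ => Set.infinite_range_of_injective Int.cast_injective) fun x hx => ?_)
  choose z hz using fun i => hx i (Set.mem_univ i)
  rw [map_zero, ← h z]
  exact congrArg (eval · P) (funext hz).symm

theorem exists_int_forall_dotProduct_ne_zero {c : ι → Fin n → E} (hc : ∀ i, c i ≠ 0) :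
    ∃ a : Fin n → ℤ, ∀ i, c i ⬝ᵥ (Int.cast ∘ a) ≠ 0 := by
  have := Fintype.ofFinite ι
  obtain ⟨a, ha⟩ := exists_int_eval_ne_zero
    (Finset.prod_ne_zero_iff.2 fun i (_ : i ∈ Finset.univ) => linForm_ne_zero (hc i))
  rw [map_prod, Finset.prod_ne_zero_iff] at ha
  exact ⟨a, fun i => eval_linForm (c i) _ ▸ ha i (Finset.mem_univ i)⟩

theorem exists_int_line_injective_div {L : ι → Fin n → E} (hL₀ : ∀ i, L i ≠ 0)
    (hL : ∀ i j, i ≠ j → LinearIndependent E ![L i, L j]) :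
    ∃ a b : Fin n → ℤ, (∀ i, L i ⬝ᵥ (Int.cast ∘ a) ≠ 0) ∧
      Function.Injective fun i => L i ⬝ᵥ (Int.cast ∘ b) / L i ⬝ᵥ (Int.cast ∘ a) := by
  obtain ⟨a, ha⟩ := exists_int_forall_dotProduct_ne_zero hL₀
  have hne : ∀ q : {q : ι × ι // q.1 ≠ q.2},
      (L q.1.2 ⬝ᵥ (Int.cast ∘ a)) • L q.1.1 + -(L q.1.1 ⬝ᵥ (Int.cast ∘ a)) • L q.1.2 ≠ 0 :=
    fun q h => ha _ (LinearIndependent.pair_iff.1 (hL _ _ q.2) _ _ h).1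
  obtain ⟨b, hb⟩ := exists_int_forall_dotProduct_ne_zero hne
  refine ⟨a, b, ha, fun i j hij => by_contra fun h => hb ⟨(i, j), h⟩ ?_⟩
  rw [add_dotProduct, smul_dotProduct, smul_dotProduct, smul_eq_mul, smul_eq_mul]
  linear_combination (div_eq_div_iff (ha i) (ha j)).1 hij

end Lines

section GaloisDescent

variable {k E : Type*} [Field k] [Field E] [Algebra k E]

theorem exists_map_algebraMap_eq_of_forall_map_eq [IsGalois k E] {ι : Type*}
    {Q : MvPolynomial ι E} (h : ∀ σ : Gal(E/k), Q.map (σ : E →+* E) = Q) :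
    ∃ P : MvPolynomial ι k, P.map (algebraMap k E) = Q := by
  refine mem_range_map_iff_coeffs_subset.2 fun x hx => ?_
  obtain ⟨s, -, rfl⟩ := mem_coeffs_iff.1 hx
  refine (InfiniteGalois.mem_range_algebraMap_iff_fixed _).2 fun σ => ?_
  exact (coeff_map ..).symm.trans (congrArg (coeff s) (h σ))

variable {n : ℕ} {ι : Type*} {P : MvPolynomial (Fin n) k} {M : ι → Fin n → E}

theorem map_algebraMap_comp_dotProduct (σ : Gal(E/k)) (c : Fin n → E) (x : Fin n → k) :
    (σ ∘ c) ⬝ᵥ (algebraMap k E ∘ x) = σ (c ⬝ᵥ (algebraMap k E ∘ x)) := by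
  simp [dotProduct]

theorem exists_map_eq_prod_linForm [IsGalois k E] (hM : Function.Injective M) {T : Finset ι}
    (hT : ∀ (σ : Gal(E/k)), ∀ i ∈ T, ∃ j ∈ T, σ ∘ M i = M j) :
    ∃ Q : MvPolynomial (Fin n) k, Q.map (algebraMap k E) = ∏ i ∈ T, linForm (M i) := by
  refine exists_map_algebraMap_eq_of_forall_map_eq fun σ => ?_
  choose! π hπT hπ using hT σ
  have hπinj : Set.InjOn π T := fun i hi j hj hij => hM <| by
    have := (hπ i hi).trans ((congrArg M hij).trans (hπ j hj).symm)
    exact σ.injective.comp_left this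
  rw [map_prod]
  refine Finset.prod_nbij π hπT hπinj (Finset.surjOn_of_injOn_of_card_le _ hπT hπinj le_rfl)
    fun i hi => ?_
  rw [map_linForm, ← hπ i hi]
  rfl

variable [Fintype ι]

theorem exists_galois_comp_eq {a : Fin n → k} (ha : ∀ i, M i ⬝ᵥ (algebraMap k E ∘ a) = 1)
    {c : E} (hc : c ≠ 0) (hPM : P.map (algebraMap k E) = C c * ∏ i, linForm (M i))
    (σ : Gal(E/k)) (i : ι) : ∃ j, σ ∘ M i = M j := by
  have hσa : (σ ∘ M i) ⬝ᵥ (algebraMap k E ∘ a) = 1 := by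
    rw [map_algebraMap_comp_dotProduct, ha, map_one]
  have hdvd : linForm (σ ∘ M i) ∣ C c * ∏ j, linForm (M j) := by
    have hi : linForm (M i) ∣ P.map (algebraMap k E) :=
      hPM ▸ (Finset.dvd_prod_of_mem (linForm ∘ M) (Finset.mem_univ i)).mul_left (C c)
    have hσ : (σ : E →+* E).comp (algebraMap k E) = algebraMap k E := σ.toAlgHom.comp_algebraMap
    have := map_dvd (MvPolynomial.map (σ : E →+* E)) hi
    rwa [map_linForm, MvPolynomial.map_map, hσ, hPM] at this
  have hprime : Prime (linForm (σ ∘ M i)) := prime_linForm fun h => by simp [h] at hσa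
  rcases hprime.dvd_or_dvd hdvd with h | h
  · exact absurd (isUnit_of_dvd_unit h ((IsUnit.mk0 c hc).map C)) hprime.not_isUnit
  · obtain ⟨j, -, hj⟩ := (hprime.dvd_finsetProd_iff _).1 h
    exact ⟨j, eq_of_linForm_dvd_linForm hσa (ha j) hj⟩

theorem eq_univ_of_galois_stable [IsGalois k E] (hP : Irreducible P) {c : k}
    (hPM : P.map (algebraMap k E) = C (algebraMap k E c) * ∏ i, linForm (M i))
    {a : Fin n → k} (ha : ∀ i, M i ⬝ᵥ (algebraMap k E ∘ a) = 1)
    (hM : Function.Injective M) {T : Finset ι} (hTne : T.Nonempty)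
    (hT : ∀ (σ : Gal(E/k)) i j, σ ∘ M i = M j → (i ∈ T ↔ j ∈ T)) : T = Finset.univ := by
  classical
  have hc : algebraMap k E c ≠ 0 := fun h => (map_injective _ (algebraMap k E).injective).ne
    hP.ne_zero (by rw [hPM, h, C_0, zero_mul, map_zero])
  have hperm := exists_galois_comp_eq ha hc hPM
  obtain ⟨Q₁, hQ₁⟩ := exists_map_eq_prod_linForm (k := k) hM (T := T) fun σ i hi =>
    (hperm σ i).imp fun j hj => ⟨(hT σ i j hj).1 hi, hj⟩
  obtain ⟨Q₂, hQ₂⟩ := exists_map_eq_prod_linForm (k := k) hM (T := Tᶜ) fun σ i hi =>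
    (hperm σ i).imp fun j hj => ⟨by simpa [hT σ i j hj] using hi, hj⟩
  have hfac : P = Q₁ * (C c * Q₂) := by
    apply map_injective _ (algebraMap k E).injective
    rw [hPM, map_mul, map_mul, hQ₁, hQ₂, map_C, ← Finset.prod_mul_prod_compl T]
    ring
  have hunit : ∀ {Q : MvPolynomial (Fin n) k} {U : Finset ι}, IsUnit Q →
      Q.map (algebraMap k E) = ∏ i ∈ U, linForm (M i) → U = ∅ := by
    intro Q U hQ hQU
    refine Finset.eq_empty_of_forall_notMem fun i hi => ?_
    have h := (hQ.map (MvPolynomial.map (algebraMap k E))).map (eval (0 : Fin n → E))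
    rw [hQU, map_prod, Finset.prod_eq_zero hi (by rw [eval_linForm, dotProduct_zero])] at h
    exact not_isUnit_zero h
  rcases hP.isUnit_or_isUnit hfac with h | h
  · exact absurd (hunit h hQ₁) hTne.ne_empty
  · exact Finset.compl_eq_empty_iff T |>.1 (hunit (isUnit_of_mul_isUnit_right h) hQ₂)

theorem aeval_minpoly_dotProduct_eq_zero [IsGalois k E] (hP : Irreducible P) {c : k}
    (hPM : P.map (algebraMap k E) = C (algebraMap k E c) * ∏ i, linForm (M i))
    {a : Fin n → k} (ha : ∀ i, M i ⬝ᵥ (algebraMap k E ∘ a) = 1)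
    (hM : Function.Injective M) (x : Fin n → k) (i j : ι) :
    Polynomial.aeval (M j ⬝ᵥ (algebraMap k E ∘ x))
      (minpoly k (M i ⬝ᵥ (algebraMap k E ∘ x))) = 0 := by
  classical
  let T : Finset ι := {j | Polynomial.aeval (M j ⬝ᵥ (algebraMap k E ∘ x))
    (minpoly k (M i ⬝ᵥ (algebraMap k E ∘ x))) = 0}
  have hT : T = Finset.univ := by
    refine eq_univ_of_galois_stable hP hPM ha hM ⟨i, by simp [T]⟩ fun σ l m hlm => ?_
    rw [Finset.mem_filter_univ, Finset.mem_filter_univ, ← hlm, map_algebraMap_comp_dotProduct,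
      ← AlgEquiv.coe_toAlgHom, Polynomial.aeval_algHom_apply, AlgEquiv.coe_toAlgHom,
      map_eq_zero_iff _ σ.injective]
  exact Finset.mem_filter_univ j |>.1 (hT ▸ Finset.mem_univ j)

end GaloisDescent

section RestrictLine

variable {R S E : Type*} [CommRing R] [CommRing S] [Field E] {n : ℕ}

/-- The univariate polynomial `F(aX + b)`: the restriction of `F` to the line through `b` in the
direction `a`. -/
def restrictLine (a b : Fin n → R) : MvPolynomial (Fin n) R →ₐ[R] Polynomial R :=
  aeval fun i => Polynomial.C (a i) * Polynomial.X + Polynomial.C (b i)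

theorem map_restrictLine (φ : R →+* S) (a b : Fin n → R) (F : MvPolynomial (Fin n) R) :
    (restrictLine a b F).map φ = restrictLine (φ ∘ a) (φ ∘ b) (F.map φ) := by
  have h : (Polynomial.mapRingHom φ).comp (restrictLine a b).toRingHom =
      (restrictLine (φ ∘ a) (φ ∘ b)).toRingHom.comp (MvPolynomial.map φ) :=
    ringHom_ext (fun r => by simp [restrictLine]) fun i => by simp [restrictLine]
  exact RingHom.congr_fun h F

theorem restrictLine_linForm (a b c : Fin n → R) :
    restrictLine a b (linForm c) =
      Polynomial.C (c ⬝ᵥ a) * Polynomial.X + Polynomial.C (c ⬝ᵥ b) := by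
  simp only [restrictLine, linForm, dotProduct, map_sum, map_mul, aeval_X, aeval_C,
    Finset.sum_mul, ← Finset.sum_add_distrib, Polynomial.algebraMap_eq, mul_add, mul_assoc]

theorem restrictLine_prod_linForm {ι : Type*} [Fintype ι] {L : ι → Fin n → E} {a : Fin n → E}
    (ha : ∀ i, L i ⬝ᵥ a ≠ 0) (b : Fin n → E) :
    restrictLine a b (∏ i, linForm (L i)) = Polynomial.C (∏ i, L i ⬝ᵥ a) *
      ∏ i, (Polynomial.X - Polynomial.C (-(L i ⬝ᵥ b / L i ⬝ᵥ a))) := by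
  rw [map_prod, map_prod, ← Finset.prod_mul_distrib]
  refine Finset.prod_congr rfl fun i _ => ?_
  rw [restrictLine_linForm, map_neg, sub_neg_eq_add, mul_add, ← Polynomial.C_mul,
    mul_div_cancel₀ _ (ha i)]

theorem isIntegral_prod_mul_div {ι : Type*} [Fintype ι] {L : ι → Fin n → E}
    (hL : ∀ i m, IsIntegral ℤ (L i m)) (a b : Fin n → ℤ)
    (ha : ∀ i, L i ⬝ᵥ (Int.cast ∘ a) ≠ 0) (i : ι) :
    IsIntegral ℤ ((∏ j, L j ⬝ᵥ (Int.cast ∘ a)) *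
      (L i ⬝ᵥ (Int.cast ∘ b) / L i ⬝ᵥ (Int.cast ∘ a))) := by
  classical
  have hint : ∀ j (x : Fin n → ℤ), IsIntegral ℤ (L j ⬝ᵥ (Int.cast ∘ x)) := fun j x =>
    IsIntegral.sum _ fun m _ => (hL j m).mul (isIntegral_algebraMap (x := x m))
  rw [← Finset.mul_prod_erase _ _ (Finset.mem_univ i), mul_right_comm, mul_div_cancel₀ _ (ha i)]
  exact (hint i b).mul (IsIntegral.prod _ fun j _ => hint j a)

theorem eq_C_mul_minpoly_of_map_eq [CharZero E] [Algebra ℚ E] {ι : Type*} [Fintype ι]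
    {f : Polynomial ℤ} {c : ℤ} (hc : c ≠ 0) {θ : ι → E} (hθ : Function.Injective θ)
    (hf : f.map (Int.castRingHom E) =
      Polynomial.C (c : E) * ∏ j, (Polynomial.X - Polynomial.C (θ j)))
    {i : ι} (hint : IsIntegral ℤ (θ i))
    (hconj : ∀ j, Polynomial.aeval (θ j) (minpoly ℚ (θ i)) = 0) :
    f = Polynomial.C c * minpoly ℤ (θ i) := by
  have hmap : (minpoly ℤ (θ i)).map (Int.castRingHom E) =
      (minpoly ℚ (θ i)).map (algebraMap ℚ E) := by
    rw [minpoly.isIntegrallyClosed_eq_field_fractions' ℚ hint, Polynomial.map_map,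
      RingHom.eq_intCast' (RingHom.comp _ _)]
  have hmin : (minpoly ℤ (θ i)).map (Int.castRingHom E) =
      ∏ j, (Polynomial.X - Polynomial.C (θ j)) := by
    refine Polynomial.eq_of_monic_of_associated ((minpoly.monic hint).map _)
      (Polynomial.monic_prod_of_monic _ _ fun j _ => Polynomial.monic_X_sub_C _)
      (associated_of_dvd_dvd ?_ ?_)
    · have hdvd : minpoly ℤ (θ i) ∣ f := minpoly.isIntegrallyClosed_dvd hint <| by
        rw [Polynomial.aeval_def, ← Polynomial.eval_map, algebraMap_int_eq, hf,
          Polynomial.eval_mul, Polynomial.eval_prod,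
          Finset.prod_eq_zero (Finset.mem_univ i) (by simp), mul_zero]
      have := Polynomial.map_dvd (Int.castRingHom E) hdvd
      rw [hf] at this
      exact (IsUnit.dvd_mul_left
        (Polynomial.isUnit_C.2 (IsUnit.mk0 _ (Int.cast_ne_zero.2 hc)))).1 this
    · refine Finset.prod_dvd_of_coprime
        (fun j _ l _ hjl => Polynomial.pairwise_coprime_X_sub_C hθ hjl) fun j _ => ?_
      rw [Polynomial.dvd_iff_isRoot, hmap, Polynomial.IsRoot.def, Polynomial.eval_map,
        ← Polynomial.aeval_def, hconj]
  apply Polynomial.map_injective (Int.castRingHom E) Int.cast_injective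
  rw [hf, Polynomial.map_mul, hmin, Polynomial.map_C, eq_intCast]

section IsGalois

variable {ι : Type*} [Fintype ι]
  {F : MvPolynomial (Fin n) ℤ} {L : ι → Fin n → E}

theorem prod_dotProduct_eq_eval (hF : F.map (Int.castRingHom E) = ∏ i, linForm (L i))
    (a : Fin n → ℤ) : ∏ i, L i ⬝ᵥ (Int.cast ∘ a) = (eval a F : ℤ) := by
  rw [← eq_intCast (Int.castRingHom E), map_eval, hF, map_prod]
  exact Finset.prod_congr rfl fun i _ => (eval_linForm _ _).symm

variable [Algebra ℚ E]

theorem aeval_minpoly_neg_div_eq_zero [IsGalois ℚ E]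
    (hF : F.map (Int.castRingHom E) = ∏ i, linForm (L i))
    (hirr : Irreducible (F.map (Int.castRingHom ℚ))) {a b : Fin n → ℤ}
    (ha : ∀ i, L i ⬝ᵥ (Int.cast ∘ a) ≠ 0)
    (hinj : Function.Injective fun i => L i ⬝ᵥ (Int.cast ∘ b) / L i ⬝ᵥ (Int.cast ∘ a)) (i j : ι) :
    Polynomial.aeval (-(L j ⬝ᵥ (Int.cast ∘ b) / L j ⬝ᵥ (Int.cast ∘ a)))
      (minpoly ℚ (-(L i ⬝ᵥ (Int.cast ∘ b) / L i ⬝ᵥ (Int.cast ∘ a)))) = 0 := by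
  let M : ι → Fin n → E := fun i => (L i ⬝ᵥ (Int.cast ∘ a))⁻¹ • L i
  have hM : ∀ i, linForm (L i) = C (L i ⬝ᵥ (Int.cast ∘ a)) * linForm (M i) := fun i => by
    rw [← linForm_smul, smul_inv_smul₀ (ha i)]
  have hFM : (F.map (Int.castRingHom ℚ)).map (algebraMap ℚ E) =
      C (algebraMap ℚ E (eval a F : ℤ)) * ∏ i, linForm (M i) := by
    rw [MvPolynomial.map_map, RingHom.eq_intCast' (RingHom.comp _ _), hF,
      Finset.prod_congr rfl fun i _ => hM i, Finset.prod_mul_distrib, ← map_prod,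
      prod_dotProduct_eq_eval hF, map_intCast (algebraMap ℚ E)]
  have hcast : ∀ x : Fin n → ℤ, algebraMap ℚ E ∘ (Int.cast ∘ x) = Int.cast ∘ x := fun x =>
    funext fun m => map_intCast (algebraMap ℚ E) (x m)
  have hMa : ∀ i, M i ⬝ᵥ (algebraMap ℚ E ∘ (Int.cast ∘ a)) = 1 := fun i => by
    rw [hcast, smul_dotProduct, smul_eq_mul, inv_mul_cancel₀ (ha i)]
  have hMb : ∀ i, L i ⬝ᵥ (Int.cast ∘ b) / L i ⬝ᵥ (Int.cast ∘ a) = M i ⬝ᵥ (Int.cast ∘ b) :=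
    fun i => by rw [smul_dotProduct, smul_eq_mul, div_eq_inv_mul]
  have hMinj : Function.Injective M := fun i j hij => hinj (by simp only [hMb, hij])
  have hneg : ∀ i, -(M i ⬝ᵥ (Int.cast ∘ b)) = M i ⬝ᵥ (algebraMap ℚ E ∘ (Int.cast ∘ (-b))) :=
    fun i => by
      rw [hcast, ← dotProduct_neg]
      exact congrArg (M i ⬝ᵥ ·) (funext fun m => (Int.cast_neg (b m)).symm)
  rw [hMb, hMb, hneg, hneg]
  exact aeval_minpoly_dotProduct_eq_zero hirr hFM hMa hMinj _ i j

theorem exists_restrictLine_eq_minpoly_of_isGalois [CharZero E] [IsGalois ℚ E] [Nonempty ι]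
    (hLint : ∀ i m, IsIntegral ℤ (L i m)) (hF : F.map (Int.castRingHom E) = ∏ i, linForm (L i))
    (hirr : Irreducible (F.map (Int.castRingHom ℚ)))
    (hL : ∀ i j, i ≠ j → LinearIndependent E ![L i, L j]) :
    ∃ a b : Fin n → ℤ, eval a F ≠ 0 ∧ ∃ x : E, IsIntegral ℤ x ∧
      restrictLine a b F = Polynomial.C (eval a F) * minpoly ℤ x := by
  have hL₀ : ∀ i, L i ≠ 0 := fun i hi => hirr.ne_zero <| by
    have : F.map (Int.castRingHom E) = 0 := by
      rw [hF, Finset.prod_eq_zero (Finset.mem_univ i) (by rw [hi, linForm_zero])]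
    rw [(map_eq_zero_iff _ (map_injective _ Int.cast_injective)).1 this, map_zero]
  obtain ⟨a, b, ha, hinj⟩ := exists_int_line_injective_div hL₀ hL
  have hprod := prod_dotProduct_eq_eval hF a
  have haF : ((eval a F : ℤ) : E) ≠ 0 := hprod ▸ Finset.prod_ne_zero_iff.2 fun i _ => ha i
  have hscale : ∀ i, L i ⬝ᵥ (Int.cast ∘ (eval a F • b)) / L i ⬝ᵥ (Int.cast ∘ a) =
      (∏ j, L j ⬝ᵥ (Int.cast ∘ a)) * (L i ⬝ᵥ (Int.cast ∘ b) / L i ⬝ᵥ (Int.cast ∘ a)) := fun i => by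
    have : (Int.cast ∘ (eval a F • b) : Fin n → E) = (eval a F : E) • (Int.cast ∘ b) :=
      funext fun m => Int.cast_mul _ _
    rw [this, hprod, dotProduct_smul, smul_eq_mul, mul_div_assoc]
  have hinj' : Function.Injective fun i =>
      L i ⬝ᵥ (Int.cast ∘ (eval a F • b)) / L i ⬝ᵥ (Int.cast ∘ a) := fun i j hij => hinj <| by
    simpa only [hscale, hprod, mul_right_inj' haF] using hij
  have hrestrict : (restrictLine a (eval a F • b) F).map (Int.castRingHom E) =
      Polynomial.C ((eval a F : ℤ) : E) * ∏ i, (Polynomial.X -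
        Polynomial.C (-(L i ⬝ᵥ (Int.cast ∘ (eval a F • b)) / L i ⬝ᵥ (Int.cast ∘ a)))) := by
    rw [map_restrictLine, hF, ← hprod]
    exact restrictLine_prod_linForm ha _
  obtain ⟨i⟩ := ‹Nonempty ι›
  have hint := (isIntegral_prod_mul_div hLint a b ha i).neg
  rw [← hscale] at hint
  exact ⟨a, eval a F • b, Int.cast_ne_zero.1 haF, _, hint, eq_C_mul_minpoly_of_map_eq
    (Int.cast_ne_zero.1 haF) (neg_injective.comp hinj') hrestrict hint
    (aeval_minpoly_neg_div_eq_zero hF hirr ha hinj' i)⟩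

end IsGalois

end RestrictLine

section NumberField

variable {n d : ℕ} {F : MvPolynomial (Fin n) ℤ} {L : Fin d → Fin n → ℂ}

theorem IsDecomp.exists_algebraicClosure (hF : IsDecomp F L) :
    ∃ L' : Fin d → Fin n → algebraicClosure ℚ ℂ, (∀ i m, (L' i m : ℂ) = L i m) ∧
      (∀ i m, IsIntegral ℤ (L' i m)) ∧
      F.map (Int.castRingHom (algebraicClosure ℚ ℂ)) = ∏ i, linForm (L' i) := by
  let L' : Fin d → Fin n → algebraicClosure ℚ ℂ := fun i m =>
    ⟨L i m, mem_algebraicClosure_iff.2 ((hF.1 i m).tower_top (A := ℚ)).isAlgebraic⟩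
  let φ := algebraMap (algebraicClosure ℚ ℂ) ℂ
  refine ⟨L', fun _ _ => rfl, fun i m =>
    (isIntegral_algHom_iff φ.toIntAlgHom φ.injective).1 (hF.1 i m), ?_⟩
  apply map_injective φ φ.injective
  rw [MvPolynomial.map_map, map_prod, RingHom.eq_intCast' (φ.comp _), hF.2]
  exact Finset.prod_congr rfl fun j _ => (map_linForm φ (L' j)).symm

theorem exists_restrictLine_eq_minpoly (hn : 2 ≤ n) (hd : n ≤ d) (hF : IsDecomp F L)
    (hirr : Irreducible (F.map (Int.castRingHom ℚ))) (hΔ : discProd L ≠ 0) :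
    ∃ a b : Fin n → ℤ, eval a F ≠ 0 ∧ ∃ x : ℂ, IsIntegral ℤ x ∧
      restrictLine a b F = Polynomial.C (eval a F) * minpoly ℤ x := by
  have hcl := algebraicClosure.isAlgClosure ℚ ℂ
  have : IsGalois ℚ (algebraicClosure ℚ ℂ) := by
    convert @IsAlgClosure.isGalois ℚ _ _ _ _ hcl _
    exact Subsingleton.elim _ _
  have : Nonempty (Fin d) := ⟨⟨0, by omega⟩⟩
  obtain ⟨L', hLL', hLint, hFL'⟩ := hF.exists_algebraicClosure
  have hind : ∀ i j, i ≠ j → LinearIndependent (algebraicClosure ℚ ℂ) ![L' i, L' j] := by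
    intro i j hij
    have h := LinearIndependent.pair_iff.1 (linearIndependent_pair_of_discProd_ne_zero hn hd hΔ hij)
    refine LinearIndependent.pair_iff.2 fun s t hst => ?_
    have h' := h s t <| funext fun m => by
      simpa [hLL'] using congrArg ((↑) : algebraicClosure ℚ ℂ → ℂ) (congrFun hst m)
    exact ⟨Subtype.ext h'.1, Subtype.ext h'.2⟩
  obtain ⟨a, b, ha, x, hx, h⟩ := exists_restrictLine_eq_minpoly_of_isGalois hLint hFL' hirr hind
  let f := (algebraMap (algebraicClosure ℚ ℂ) ℂ).toIntAlgHom
  have hf : Function.Injective f := (algebraMap (algebraicClosure ℚ ℂ) ℂ).injective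
  exact ⟨a, b, ha, f x, (isIntegral_algHom_iff f hf).2 hx, by rw [minpoly.algHom_eq f hf, h]⟩

theorem exists_numberField_minpoly_eq {x : ℂ} (hx : IsIntegral ℤ x) :
    ∃ (K : Type) (_ : Field K) (_ : NumberField K) (θ : NumberField.RingOfIntegers K),
      IntermediateField.adjoin ℚ {(θ : K)} = ⊤ ∧ minpoly ℤ θ = minpoly ℤ x := by
  let K := IntermediateField.adjoin ℚ {x}
  have : FiniteDimensional ℚ K := IntermediateField.adjoin.finiteDimensional hx.tower_top
  let f := (algebraMap K ℂ).toIntAlgHom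
  have hf : Function.Injective f := (algebraMap K ℂ).injective
  let g : K := IntermediateField.AdjoinSimple.gen ℚ x
  have hg : IsIntegral ℤ g := (isIntegral_algHom_iff f hf).1 hx
  refine ⟨K, inferInstance, ⟨⟩, ⟨g, hg⟩, ?_, ?_⟩
  · exact IntermediateField.lift_injective _
      ((IntermediateField.lift_adjoin_simple ..).trans (IntermediateField.lift_top ..).symm)
  · have h : Function.Injective (algebraMap (NumberField.RingOfIntegers K) K).toIntAlgHom :=
      NumberField.RingOfIntegers.coe_injective
    exact (minpoly.algHom_eq _ h _).symm.trans (minpoly.algHom_eq f hf _).symm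

end NumberField

theorem exists_separable_map_zmod {h : Polynomial ℤ}
    (hsep : (h.map (Int.castRingHom ℚ)).Separable) :
    ∃ N : ℤ, N ≠ 0 ∧ ∀ p : ℕ, p.Prime → ¬ (p : ℤ) ∣ N →
      (h.map (Int.castRingHom (ZMod p))).Separable := by
  obtain ⟨u, v, huv⟩ := hsep
  obtain ⟨c, hc, hu⟩ := IsLocalization.integerNormalization_spec (nonZeroDivisors ℤ) u
  obtain ⟨e, he, hv⟩ := IsLocalization.integerNormalization_spec (nonZeroDivisors ℤ) v
  set U := IsLocalization.integerNormalization (nonZeroDivisors ℤ) u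
  set V := IsLocalization.integerNormalization (nonZeroDivisors ℤ) v
  have bezout : Polynomial.C e * U * h + Polynomial.C c * V * Polynomial.derivative h
      = Polynomial.C (c * e) := by
    apply Polynomial.map_injective (Int.castRingHom ℚ) Int.cast_injective
    rw [algebraMap_int_eq, zsmul_eq_mul] at hu hv
    simp only [Polynomial.map_add, Polynomial.map_mul, hu, hv, eq_intCast,
      ← Polynomial.derivative_map, map_mul, Polynomial.map_intCast]
    linear_combination (c * e : Polynomial ℚ) * huv
  refine ⟨c * e, mul_ne_zero (nonZeroDivisors.ne_zero hc) (nonZeroDivisors.ne_zero he),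
    fun p hp hN => ?_⟩
  have : Fact p.Prime := ⟨hp⟩
  set w : Polynomial (ZMod p) := Polynomial.C (((c * e : ℤ) : ZMod p)⁻¹) with hw_def
  have hw : w * Polynomial.C ((c * e : ℤ) : ZMod p) = 1 := by
    rw [hw_def, ← map_mul, inv_mul_cancel₀ (by rwa [Ne, ZMod.intCast_zmod_eq_zero_iff_dvd]),
      map_one]
  have bezout_zmod := congrArg (Polynomial.map (Int.castRingHom (ZMod p))) bezout
  simp only [Polynomial.map_add, Polynomial.map_mul, Polynomial.map_C, ← Polynomial.derivative_map,
    eq_intCast (Int.castRingHom (ZMod p))] at bezout_zmod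
  exact ⟨w * (Polynomial.C (e : ZMod p) * U.map (Int.castRingHom (ZMod p))),
    w * (Polynomial.C (c : ZMod p) * V.map (Int.castRingHom (ZMod p))),
    by linear_combination w * bezout_zmod + hw⟩

/-- The number of roots of `h` modulo `p`. It is an upper bound for the number of linear factors
over `ℤ_p` of a form whose restriction to some integral line is proportional to `h`. -/
def modRootCount (h : Polynomial ℤ) (p : ℕ) : ℕ :=
  {r : ZMod p | (h.map (Int.castRingHom (ZMod p))).IsRoot r}.ncard

section ModRootCount

variable {h : Polynomial ℤ} {p : ℕ} [Fact p.Prime]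

theorem modRootCount_eq_card_toFinset_roots (hh : h.map (Int.castRingHom (ZMod p)) ≠ 0) :
    modRootCount h p = (h.map (Int.castRingHom (ZMod p))).roots.toFinset.card := by
  rw [modRootCount, ← Set.ncard_coe_finset]
  congr 1
  ext r
  simp [hh]

theorem modRootCount_le_natDegree (hh : h.map (Int.castRingHom (ZMod p)) ≠ 0) :
    modRootCount h p ≤ h.natDegree :=
  calc modRootCount h p = (h.map (Int.castRingHom (ZMod p))).roots.toFinset.card :=
        modRootCount_eq_card_toFinset_roots hh
    _ ≤ (h.map (Int.castRingHom (ZMod p))).roots.card := Multiset.toFinset_card_le _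
    _ ≤ (h.map (Int.castRingHom (ZMod p))).natDegree := Polynomial.card_roots' _
    _ ≤ h.natDegree := Polynomial.natDegree_map_le

theorem card_le_modRootCount_of_prod_X_sub_C_dvd
    (hsep : (h.map (Int.castRingHom (ZMod p))).Separable) {ι : Type*} [Fintype ι] {r : ι → ZMod p}
    (hr : ∏ i, (Polynomial.X - Polynomial.C (r i)) ∣ h.map (Int.castRingHom (ZMod p))) :
    Fintype.card ι ≤ modRootCount h p := by
  have hinj : Function.Injective r := Polynomial.separable_prod_X_sub_C_iff.1 (hsep.of_dvd hr)
  have hroot : ∀ i, (h.map (Int.castRingHom (ZMod p))).IsRoot (r i) := fun i =>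
    Polynomial.dvd_iff_isRoot.1 ((Finset.dvd_prod_of_mem
      (fun i => Polynomial.X - Polynomial.C (r i)) (Finset.mem_univ i)).trans hr)
  rw [← Nat.card_eq_fintype_card, ← Set.ncard_range_of_injective hinj]
  exact Set.ncard_le_ncard (Set.range_subset_iff.2 hroot)

theorem card_le_modRootCount_of_map_eq_mul_prod_linForm {n : ℕ} {F : MvPolynomial (Fin n) ℤ}
    {a b : Fin n → ℤ} (hline : restrictLine a b F = Polynomial.C (eval a F) * h)
    (ha : ¬ (p : ℤ) ∣ eval a F) (hsep : (h.map (Int.castRingHom (ZMod p))).Separable)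
    {ι : Type*} [Fintype ι] {c : ι → Fin n → ZMod p} {G : MvPolynomial (Fin n) (ZMod p)}
    (hfac : F.map (Int.castRingHom (ZMod p)) = G * ∏ i, linForm (c i)) :
    Fintype.card ι ≤ modRootCount h p := by
  have ha' : ((eval a F : ℤ) : ZMod p) ≠ 0 := by
    rwa [Ne, ZMod.intCast_zmod_eq_zero_iff_dvd]
  have hca : ∀ i, c i ⬝ᵥ (Int.cast ∘ a) ≠ 0 := by
    have heval := map_eval (Int.castRingHom (ZMod p)) a F
    rw [hfac, map_mul, map_prod, eq_intCast] at heval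
    intro i
    rw [← eval_linForm]
    exact Finset.prod_ne_zero_iff.1 (right_ne_zero_of_mul (heval ▸ ha')) i (Finset.mem_univ i)
  refine card_le_modRootCount_of_prod_X_sub_C_dvd hsep
    (r := fun i => -(c i ⬝ᵥ (Int.cast ∘ b) / c i ⬝ᵥ (Int.cast ∘ a))) ?_
  have hmap := map_restrictLine (Int.castRingHom (ZMod p)) a b F
  rw [hline, hfac, map_mul, Polynomial.map_mul, Polynomial.map_C, eq_intCast] at hmap
  rw [← IsUnit.dvd_mul_left (Polynomial.isUnit_C.2 (IsUnit.mk0 _ ha')), hmap]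
  refine dvd_mul_of_dvd_right ?_ _
  exact (restrictLine_prod_linForm hca _) ▸ dvd_mul_left _ _

end ModRootCount

section IdealCount

open NumberField Ideal

variable {K : Type*} [Field K] [NumberField K]

theorem exponent_ne_zero_of_adjoin_eq_top {θ : 𝓞 K}
    (hθ : IntermediateField.adjoin ℚ {(θ : K)} = ⊤) : RingOfIntegers.exponent θ ≠ 0 := by
  have hintegral : IsIntegral ℚ (θ : K) := Algebra.IsIntegral.isIntegral _
  have htop : Algebra.adjoin ℚ {(θ : K)} = ⊤ := by
    rw [← IntermediateField.adjoin_simple_toSubalgebra_of_isAlgebraic hintegral.isAlgebraic, hθ,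
      IntermediateField.top_toSubalgebra]
  let B := PowerBasis.ofAdjoinEqTop hintegral htop
  have hB : B.gen = (θ : K) := PowerBasis.ofAdjoinEqTop_gen hintegral htop
  have hBint : IsIntegral ℤ B.gen := hB ▸ θ.2
  obtain ⟨D, hD⟩ : ∃ D : ℤ, algebraMap ℤ ℚ D = Algebra.discr ℚ B.basis := by
    refine IsIntegrallyClosed.isIntegral_iff.1 (Algebra.discr_isIntegral ℚ fun i => ?_)
    rw [B.basis_eq_pow]
    exact hBint.pow _
  have hD0 : D ≠ 0 := by
    rintro rfl
    rw [map_zero] at hD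
    exact Algebra.discr_not_zero_of_basis ℚ B.basis hD.symm
  have hmem : algebraMap ℤ (𝓞 K) D ∈ conductor ℤ θ := by
    rw [mem_conductor_iff]
    intro z
    have hz := Algebra.discr_mul_isIntegral_mem_adjoin ℚ hBint (RingOfIntegers.isIntegral_coe z)
    rw [← hD, hB] at hz
    have hz' : (algebraMap (𝓞 K) K).toIntAlgHom (algebraMap ℤ (𝓞 K) D * z) ∈
        (Algebra.adjoin ℤ {θ}).map (algebraMap (𝓞 K) K).toIntAlgHom := by
      rw [AlgHom.map_adjoin_singleton]
      simpa [Algebra.smul_def] using hz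
    obtain ⟨y, hy, hyz⟩ := hz'
    rwa [← RingOfIntegers.coe_injective hyz]
  rw [RingOfIntegers.exponent, Ne, absNorm_eq_zero_iff]
  exact fun h => hD0 ((Submodule.mem_bot ℤ).1 (h ▸ hmem))

theorem modRootCount_minpoly_le_card_absNorm_eq {θ : 𝓞 K} {p : ℕ} [Fact p.Prime]
    (hp : ¬ p ∣ RingOfIntegers.exponent θ) :
    modRootCount (minpoly ℤ θ) p ≤ Nat.card {I : Ideal (𝓞 K) // absNorm I = p} := by
  have hmem : ∀ r : {r : ZMod p | ((minpoly ℤ θ).map (Int.castRingHom (ZMod p))).IsRoot r},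
      Polynomial.X - Polynomial.C r.1 ∈ RingOfIntegers.monicFactorsMod θ p := by
    rintro ⟨r, hr⟩
    rw [RingOfIntegers.monicFactorsMod, Multiset.mem_toFinset,
      UniqueFactorizationMonoid.mem_normalizedFactors_iff'
        (Polynomial.map_monic_ne_zero (minpoly.monic θ.isIntegral))]
    exact ⟨Polynomial.irreducible_X_sub_C r, (Polynomial.monic_X_sub_C r).normalize_eq_self,
      Polynomial.dvd_iff_isRoot.2 hr⟩
  let primeOver r := (primesOverSpanEquivMonicFactorsMod hp).symm ⟨_, hmem r⟩
  have hnorm : ∀ r, absNorm (primeOver r).1 = p := by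
    intro r
    have hdeg := inertiaDeg_primesOverSpanEquivMonicFactorsMod_symm_apply' hp (hmem r)
    have : (primeOver r).1.IsPrime := (primeOver r).2.1
    have : (primeOver r).1.LiesOver (span {(p : ℤ)}) := (primeOver r).2.2
    rw [← natAbs_pow_inertiaDeg (p : ℤ), hdeg, Polynomial.natDegree_X_sub_C, pow_one,
      Int.natAbs_natCast]
  have hinj : Function.Injective fun r =>
      (⟨(primeOver r).1, hnorm r⟩ : {I : Ideal (𝓞 K) // absNorm I = p}) := by
    intro r s hrs
    have heq := (primesOverSpanEquivMonicFactorsMod hp).symm.injective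
      (Subtype.ext (Subtype.mk.inj hrs))
    simpa only [Subtype.mk.injEq, sub_right_inj, Polynomial.C_inj, Subtype.val_inj] using heq
  have : Finite {I : Ideal (𝓞 K) // absNorm I = p} := (finite_setOfPred_absNorm_eq p).to_subtype
  exact Nat.card_le_card_of_injective _ hinj

theorem mul_sup_span_natCast_absNorm_eq {I J : Ideal (𝓞 K)}
    (h : (absNorm I).Coprime (absNorm J)) : I * J ⊔ span {(absNorm I : 𝓞 K)} = I := by
  have hI : span {(absNorm I : 𝓞 K)} ≤ I := (span_singleton_le_iff_mem _).2 (absNorm_mem I)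
  have htop : J ⊔ span {(absNorm I : 𝓞 K)} = ⊤ := by
    obtain ⟨x, y, hxy⟩ := Nat.isCoprime_iff_coprime.2 h.symm
    have hone : (x : 𝓞 K) * (absNorm J : 𝓞 K) + y * (absNorm I : 𝓞 K) = 1 := mod_cast
      congrArg (Int.cast : ℤ → 𝓞 K) hxy
    rw [eq_top_iff_one, ← hone]
    exact Submodule.add_mem_sup (J.mul_mem_left _ (absNorm_mem J))
      (mul_mem_left _ _ (mem_span_singleton_self _))
  refine le_antisymm (sup_le mul_le_left hI) ?_
  calc I = I * J ⊔ I * span {(absNorm I : 𝓞 K)} := by rw [← Ideal.mul_sup, htop, mul_top]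
    _ ≤ I * J ⊔ span {(absNorm I : 𝓞 K)} := sup_le_sup_left mul_le_right _

theorem card_absNorm_eq_mul_le {a b : ℕ} (hab : a.Coprime b) :
    Nat.card {I : Ideal (𝓞 K) // absNorm I = a} * Nat.card {I : Ideal (𝓞 K) // absNorm I = b} ≤
      Nat.card {I : Ideal (𝓞 K) // absNorm I = a * b} := by
  have : Finite {I : Ideal (𝓞 K) // absNorm I = a * b} :=
    (finite_setOfPred_absNorm_eq _).to_subtype
  rw [← Nat.card_prod]
  refine Nat.card_le_card_of_injective
    (fun x => ⟨x.1.1 * x.2.1, by rw [map_mul, x.1.2, x.2.2]⟩) ?_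
  rintro ⟨⟨I, rfl⟩, ⟨J, rfl⟩⟩ ⟨⟨I', hI'⟩, ⟨J', hJ'⟩⟩ h
  replace h : I * J = I' * J' := congrArg Subtype.val h
  have hI : I = I' := by
    rw [← mul_sup_span_natCast_absNorm_eq hab, h, ← hI', mul_sup_span_natCast_absNorm_eq]
    rwa [hI', hJ']
  have hJ : J = J' := by
    rw [← mul_sup_span_natCast_absNorm_eq hab.symm, mul_comm, h, mul_comm, ← hJ',
      mul_sup_span_natCast_absNorm_eq]
    rw [hI', hJ']
    exact hab.symm
  subst hI hJ
  rfl

theorem prod_card_absNorm_eq_le (s : Finset ℕ) (hs : ∀ p ∈ s, p.Prime) :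
    ∏ p ∈ s, Nat.card {I : Ideal (𝓞 K) // absNorm I = p} ≤
      Nat.card {I : Ideal (𝓞 K) // absNorm I = ∏ p ∈ s, p} := by
  classical
  induction s using Finset.induction_on with
  | empty => simp [absNorm_eq_one_iff]
  | insert q s hq ih =>
    rw [Finset.forall_mem_insert] at hs
    rw [Finset.prod_insert hq, Finset.prod_insert hq]
    refine (Nat.mul_le_mul_left _ (ih hs.2)).trans (card_absNorm_eq_mul_le ?_)
    exact Nat.Coprime.prod_right fun p hp =>
      (Nat.coprime_primes hs.1 (hs.2 p hp)).2 (ne_of_mem_of_not_mem hp hq).symm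

theorem sum_card_absNorm_eq_le (K : Type*) [Field K] [NumberField K] (N : ℕ) :
    ∑ m ∈ Finset.Ioc 0 N, Nat.card {I : Ideal (𝓞 K) // absNorm I = m} ≤
      Nat.card {I : Ideal (𝓞 K) // absNorm I ≤ N} := by
  have : Finite {I : Ideal (𝓞 K) // absNorm I ≤ N} := (finite_setOfPred_absNorm_le N).to_subtype
  have (m : ℕ) : Finite {I : Ideal (𝓞 K) // absNorm I = m} :=
    (finite_setOfPred_absNorm_eq m).to_subtype
  rw [← Finset.sum_coe_sort, ← Nat.card_sigma]
  refine Nat.card_le_card_of_injective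
    (fun x => ⟨x.2.1, x.2.2.trans_le (Finset.mem_Ioc.1 x.1.2).2⟩) ?_
  rintro ⟨⟨m, hm⟩, ⟨I, hI⟩⟩ ⟨⟨m', hm'⟩, ⟨I', hI'⟩⟩ h
  obtain rfl : I = I' := congrArg Subtype.val h
  obtain rfl : m = m' := hI.symm.trans hI'
  rfl

theorem exists_sum_card_absNorm_eq_le (K : Type*) [Field K] [NumberField K] :
    ∃ C : ℝ, 0 ≤ C ∧ ∀ N : ℕ,
      ∑ m ∈ Finset.Ioc 0 N, (Nat.card {I : Ideal (𝓞 K) // absNorm I = m} : ℝ) ≤ C * N := by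
  obtain ⟨C, hC⟩ := ((Ideal.tendsto_norm_le_div_atTop K).comp
    tendsto_natCast_atTop_atTop).bddAbove_range
  refine ⟨max C 0, le_max_right C 0, fun N => ?_⟩
  rcases N.eq_zero_or_pos with rfl | hN
  · simp
  have hCN : (Nat.card {I : Ideal (𝓞 K) // absNorm I ≤ N} : ℝ) / N ≤ C := by
    simpa using hC (Set.mem_range_self N)
  calc ∑ m ∈ Finset.Ioc 0 N, (Nat.card {I : Ideal (𝓞 K) // absNorm I = m} : ℝ)
      ≤ Nat.card {I : Ideal (𝓞 K) // absNorm I ≤ N} := mod_cast sum_card_absNorm_eq_le K N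
    _ ≤ max C 0 * N := (div_le_iff₀ (mod_cast hN)).1 (hCN.trans (le_max_left C 0))

end IdealCount

/-- The square-free integers `0 < u ≤ X` all of whose prime factors exceed `z`, the shape of the
moduli `u₂`. -/
def squarefreeRough (z X : ℝ) : Finset ℕ :=
  {u ∈ Finset.Ioc 0 ⌊X⌋₊ | Squarefree u ∧ ∀ p ∈ u.primeFactors, z < (p : ℝ)}

theorem mem_squarefreeRough {z X : ℝ} {u : ℕ} : u ∈ squarefreeRough z X ↔
    (u : ℝ) ≤ X ∧ Squarefree u ∧ ∀ p ∈ u.primeFactors, z < (p : ℝ) := by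
  rw [squarefreeRough, Finset.mem_filter, Finset.mem_Ioc]
  refine and_congr_left fun h => ?_
  rw [Nat.le_floor_iff' h.1.ne_zero, and_iff_right (Nat.pos_of_ne_zero h.1.ne_zero)]

theorem primeFactors_div_of_squarefree {u q : ℕ} (hu : Squarefree u) (hq : q ∈ u.primeFactors) :
    (u / q).primeFactors = u.primeFactors.erase q := by
  have hqp := Nat.prime_of_mem_primeFactors hq
  have h := Nat.primeFactors_div_gcd hu hqp.ne_zero
  rwa [Nat.gcd_eq_right (Nat.dvd_of_mem_primeFactors hq), hqp.primeFactors,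
    Finset.sdiff_singleton_eq_erase] at h

theorem div_mem_squarefreeRough {z X : ℝ} {u q : ℕ} (hu : u ∈ squarefreeRough z X)
    (hq : q ∈ u.primeFactors) : u / q ∈ squarefreeRough z (X / q) := by
  obtain ⟨huX, hsq, hz⟩ := mem_squarefreeRough.1 hu
  have hqu := Nat.dvd_of_mem_primeFactors hq
  refine mem_squarefreeRough.2 ⟨?_, hsq.squarefree_of_dvd (Nat.div_dvd_of_dvd hqu), fun p hp => ?_⟩
  · exact Nat.cast_div_le.trans (by gcongr)
  · rw [primeFactors_div_of_squarefree hsq hq] at hp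
    exact hz p (Finset.mem_of_mem_erase hp)

section MultiplicativeSums

variable {z C X : ℝ} {g : ℕ → ℝ}

theorem sum_squarefreeRough_mem_primeFactors_le (hg : ∀ p, 0 ≤ g p)
    (hsum : ∀ X : ℝ, 0 ≤ X →
      ∑ u ∈ squarefreeRough z X, ∏ p ∈ u.primeFactors, g p ≤ C * X)
    (q : ℕ) (hX : 0 ≤ X) :
    ∑ u ∈ squarefreeRough z X with q ∈ u.primeFactors, ∏ p ∈ u.primeFactors.erase q, g p ≤
      C * (X / q) := by
  have hinj : Set.InjOn (· / q) ({u ∈ squarefreeRough z X | q ∈ u.primeFactors} : Finset ℕ) := by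
    intro u hu v hv huv
    have hqu := Nat.dvd_of_mem_primeFactors (Finset.mem_filter.1 hu).2
    have hqv := Nat.dvd_of_mem_primeFactors (Finset.mem_filter.1 hv).2
    exact (Nat.div_left_inj hqu hqv).1 huv
  calc ∑ u ∈ squarefreeRough z X with q ∈ u.primeFactors, ∏ p ∈ u.primeFactors.erase q, g p
      = ∑ u ∈ squarefreeRough z X with q ∈ u.primeFactors, ∏ p ∈ (u / q).primeFactors, g p := by
        refine Finset.sum_congr rfl fun u hu => ?_
        obtain ⟨hu, hq⟩ := Finset.mem_filter.1 hu
        rw [primeFactors_div_of_squarefree (mem_squarefreeRough.1 hu).2.1 hq]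
    _ = ∑ v ∈ {u ∈ squarefreeRough z X | q ∈ u.primeFactors}.image (· / q),
          ∏ p ∈ v.primeFactors, g p := by
        rw [Finset.sum_image hinj]
    _ ≤ ∑ v ∈ squarefreeRough z (X / q), ∏ p ∈ v.primeFactors, g p := by
        refine Finset.sum_le_sum_of_subset_of_nonneg (Finset.image_subset_iff.2 fun u hu => ?_)
          fun v _ _ => Finset.prod_nonneg fun p _ => hg p
        obtain ⟨hu, hq⟩ := Finset.mem_filter.1 hu
        exact div_mem_squarefreeRough hu hq
    _ ≤ C * (X / q) := hsum _ (by positivity)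

theorem sum_squarefreeRough_update_le (hg : ∀ p, 0 ≤ g p)
    (hsum : ∀ X : ℝ, 0 ≤ X →
      ∑ u ∈ squarefreeRough z X, ∏ p ∈ u.primeFactors, g p ≤ C * X)
    (q : ℕ) {r : ℝ} (hr : 0 ≤ r) (hX : 0 ≤ X) :
    ∑ u ∈ squarefreeRough z X, ∏ p ∈ u.primeFactors, Function.update g q r p ≤
      C * (1 + r / q) * X := by
  have hdvd : ∑ u ∈ squarefreeRough z X with q ∈ u.primeFactors,
      ∏ p ∈ u.primeFactors, Function.update g q r p ≤ r * (C * (X / q)) := by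
    refine le_trans (le_of_eq ?_)
      (mul_le_mul_of_nonneg_left (sum_squarefreeRough_mem_primeFactors_le hg hsum q hX) hr)
    rw [Finset.mul_sum]
    refine Finset.sum_congr rfl fun u hu => ?_
    rw [Finset.prod_update_of_mem (Finset.mem_filter.1 hu).2, Finset.sdiff_singleton_eq_erase]
  have hndvd : ∑ u ∈ squarefreeRough z X with q ∉ u.primeFactors,
      ∏ p ∈ u.primeFactors, Function.update g q r p ≤ C * X := by
    calc ∑ u ∈ squarefreeRough z X with q ∉ u.primeFactors,
          ∏ p ∈ u.primeFactors, Function.update g q r p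
        = ∑ u ∈ squarefreeRough z X with q ∉ u.primeFactors, ∏ p ∈ u.primeFactors, g p :=
          Finset.sum_congr rfl fun u hu =>
            Finset.prod_update_of_notMem (Finset.mem_filter.1 hu).2 _ _
      _ ≤ ∑ u ∈ squarefreeRough z X, ∏ p ∈ u.primeFactors, g p :=
          Finset.sum_le_sum_of_subset_of_nonneg (Finset.filter_subset _ _)
            fun u _ _ => Finset.prod_nonneg fun p _ => hg p
      _ ≤ C * X := hsum X hX
  calc ∑ u ∈ squarefreeRough z X, ∏ p ∈ u.primeFactors, Function.update g q r p
      ≤ r * (C * (X / q)) + C * X := by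
        rw [← Finset.sum_filter_add_sum_filter_not _ (fun u => q ∈ u.primeFactors)]
        exact add_le_add hdvd hndvd
    _ = C * (1 + r / q) * X := by ring

theorem sum_squarefreeRough_piecewise_le (hg : ∀ p, 0 ≤ g p)
    (hsum : ∀ X : ℝ, 0 ≤ X →
      ∑ u ∈ squarefreeRough z X, ∏ p ∈ u.primeFactors, g p ≤ C * X)
    {f : ℕ → ℝ} (hf : ∀ p, 0 ≤ f p) (S : Finset ℕ) (hX : 0 ≤ X) :
    ∑ u ∈ squarefreeRough z X, ∏ p ∈ u.primeFactors, S.piecewise f g p ≤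
      C * (∏ p ∈ S, (1 + f p / p)) * X := by
  induction S using Finset.induction_on generalizing X with
  | empty => simpa using hsum X hX
  | insert q S hq ih =>
    have hnonneg : ∀ p, 0 ≤ S.piecewise f g p := fun p =>
      Finset.piecewise_cases S f g (0 ≤ ·) (hf p) (hg p)
    rw [Finset.piecewise_insert, Finset.prod_insert hq, mul_comm (1 + _), ← mul_assoc C]
    exact sum_squarefreeRough_update_le hnonneg (fun X hX => ih hX) q (hf q) hX

theorem prod_Ioc_one_add_inv (z : ℕ) : ∏ m ∈ Finset.Ioc 0 z, (1 + 1 / (m : ℝ)) = z + 1 := by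
  induction z with
  | zero => simp
  | succ z ih =>
    rw [← Finset.insert_Ioc_right_eq_Ioc_add_one (Nat.zero_le z), Finset.prod_insert (by simp), ih]
    push_cast
    field_simp

theorem prod_one_add_div_le_pow {S : Finset ℕ} {y a : ℕ} (hS : S ⊆ Finset.Ioc 0 y)
    (hg : ∀ p ∈ S, 0 ≤ g p) (hga : ∀ p ∈ S, g p ≤ a) :
    ∏ p ∈ S, (1 + g p / p) ≤ ((y : ℝ) + 1) ^ a := by
  have hinv (p : ℕ) : (0 : ℝ) ≤ 1 / p := by positivity
  calc ∏ p ∈ S, (1 + g p / p) ≤ ∏ p ∈ S, (1 + 1 / (p : ℝ)) ^ a := by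
        refine Finset.prod_le_prod (fun p hp => ?_) fun p hp => ?_
        · have := hg p hp
          positivity
        · calc 1 + g p / p ≤ 1 + a * (1 / (p : ℝ)) := by
                rw [mul_one_div]
                have := hga p hp
                gcongr
            _ ≤ (1 + 1 / (p : ℝ)) ^ a := one_add_mul_le_pow (by linarith [hinv p]) a
    _ ≤ ∏ p ∈ Finset.Ioc 0 y, (1 + 1 / (p : ℝ)) ^ a :=
        Finset.prod_le_prod_of_subset_of_one_le hS (fun p _ => by positivity)
          fun p _ _ => one_le_pow₀ (by linarith [hinv p])
    _ = ((y : ℝ) + 1) ^ a := by rw [Finset.prod_pow, prod_Ioc_one_add_inv]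

theorem sum_squarefreeRough_prod_mul_pow_card_le (hC : 0 ≤ C) (hg : ∀ p, 0 ≤ g p) {D : ℕ}
    (hgD : ∀ p, p.Prime → g p ≤ D)
    (hsum : ∀ X : ℝ, 0 ≤ X →
      ∑ u ∈ squarefreeRough z X, ∏ p ∈ u.primeFactors, g p ≤ C * X)
    (k y : ℕ) (hX : 0 ≤ X) :
    ∑ u ∈ squarefreeRough z X,
        (∏ p ∈ u.primeFactors, g p) * (k : ℝ) ^ (u.primeFactors.filter (· ≤ y)).card ≤
      C * ((y : ℝ) + 1) ^ (k * D) * X := by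
  set P : Finset ℕ := {p ∈ Finset.Ioc 0 y | p.Prime} with hP
  have hkg : ∀ p, 0 ≤ k * g p := fun p => mul_nonneg k.cast_nonneg (hg p)
  have hweight : ∀ u : ℕ,
      (∏ p ∈ u.primeFactors, g p) * (k : ℝ) ^ (u.primeFactors.filter (· ≤ y)).card =
        ∏ p ∈ u.primeFactors, P.piecewise (fun p => k * g p) g p := by
    intro u
    rw [← Finset.prod_const, Finset.prod_filter, ← Finset.prod_mul_distrib]
    refine Finset.prod_congr rfl fun p hp => ?_
    have hpp := Nat.prime_of_mem_primeFactors hp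
    simp [Finset.piecewise, hP, hpp, hpp.pos, mul_comm]
  calc ∑ u ∈ squarefreeRough z X,
        (∏ p ∈ u.primeFactors, g p) * (k : ℝ) ^ (u.primeFactors.filter (· ≤ y)).card
      = ∑ u ∈ squarefreeRough z X, ∏ p ∈ u.primeFactors, P.piecewise (fun p => k * g p) g p :=
        Finset.sum_congr rfl fun u _ => hweight u
    _ ≤ C * (∏ p ∈ P, (1 + k * g p / p)) * X :=
        sum_squarefreeRough_piecewise_le hg hsum hkg P hX
    _ ≤ C * ((y : ℝ) + 1) ^ (k * D) * X := by
        gcongr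
        refine prod_one_add_div_le_pow (Finset.filter_subset _ _) (fun p _ => hkg p) fun p hp => ?_
        push_cast
        exact mul_le_mul_of_nonneg_left (hgD p (Finset.mem_filter.1 hp).2) k.cast_nonneg

end MultiplicativeSums

theorem exists_sum_prod_modRootCount_le {x : ℂ} (hx : IsIntegral ℤ x) :
    ∃ z C : ℝ, 0 ≤ C ∧ ∀ X : ℝ, 0 ≤ X → ∑ u ∈ squarefreeRough z X,
      ∏ p ∈ u.primeFactors, (modRootCount (minpoly ℤ x) p : ℝ) ≤ C * X := by
  obtain ⟨K, _, _, θ, hθ, hmin⟩ := exists_numberField_minpoly_eq hx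
  obtain ⟨C, hC, hsum⟩ := exists_sum_card_absNorm_eq_le K
  refine ⟨RingOfIntegers.exponent θ, C, hC, fun X hX => ?_⟩
  have hterm : ∀ u ∈ squarefreeRough (RingOfIntegers.exponent θ) X,
      ∏ p ∈ u.primeFactors, modRootCount (minpoly ℤ x) p ≤
        Nat.card {I : Ideal (NumberField.RingOfIntegers K) // Ideal.absNorm I = u} := by
    intro u hu
    obtain ⟨-, hsq, hz⟩ := mem_squarefreeRough.1 hu
    calc ∏ p ∈ u.primeFactors, modRootCount (minpoly ℤ x) p
        ≤ ∏ p ∈ u.primeFactors,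
            Nat.card {I : Ideal (NumberField.RingOfIntegers K) // Ideal.absNorm I = p} := by
          refine Finset.prod_le_prod' fun p hp => ?_
          have : Fact p.Prime := ⟨Nat.prime_of_mem_primeFactors hp⟩
          rw [← hmin]
          exact modRootCount_minpoly_le_card_absNorm_eq <| Nat.not_dvd_of_pos_of_lt
            (Nat.pos_of_ne_zero (exponent_ne_zero_of_adjoin_eq_top hθ)) (mod_cast hz p hp)
      _ ≤ Nat.card {I : Ideal (NumberField.RingOfIntegers K) // Ideal.absNorm I = u} := by
          simpa only [Nat.prod_primeFactors_of_squarefree hsq] using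
            prod_card_absNorm_eq_le u.primeFactors fun p hp => Nat.prime_of_mem_primeFactors hp
  calc ∑ u ∈ squarefreeRough (RingOfIntegers.exponent θ) X,
        ∏ p ∈ u.primeFactors, (modRootCount (minpoly ℤ x) p : ℝ)
      ≤ ∑ u ∈ Finset.Ioc 0 ⌊X⌋₊,
          (Nat.card {I : Ideal (NumberField.RingOfIntegers K) // Ideal.absNorm I = u} : ℝ) :=
        (Finset.sum_le_sum fun u hu => mod_cast hterm u hu).trans
          (Finset.sum_le_sum_of_subset_of_nonneg (Finset.filter_subset _ _)
            fun _ _ _ => Nat.cast_nonneg _)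
    _ ≤ C * ⌊X⌋₊ := hsum _
    _ ≤ C * X := by gcongr; exact Nat.floor_le hX

section LinearFactors

variable {n d : ℕ} {F : MvPolynomial (Fin n) ℤ} {L : Fin d → Fin n → ℂ}

theorem map_intCast_eq_mul_prod_linForm {R S ι : Type*} [CommRing R] [CommRing S] [Fintype ι]
    (φ : R →+* S) {ℓ : ι → Fin n → R} {G : MvPolynomial (Fin n) R}
    (h : F.map (Int.castRingHom R) = G * ∏ i, linForm (ℓ i)) :
    F.map (Int.castRingHom S) = G.map φ * ∏ i, linForm (φ ∘ ℓ i) := by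
  have hφ := congrArg (MvPolynomial.map φ) h
  rwa [MvPolynomial.map_map, map_mul, map_prod, RingHom.eq_intCast' (φ.comp _),
    Finset.prod_congr rfl fun i _ => map_linForm φ (ℓ i)] at hφ

theorem linForm_ne_zero_of_eval_ne_zero {R ι : Type*} [CommRing R] [Fintype ι]
    {c : ι → Fin n → R} {F G : MvPolynomial (Fin n) R} (h : F = G * ∏ i, linForm (c i))
    {x : Fin n → R} (hx : eval x F ≠ 0) (i : ι) : c i ≠ 0 := by
  rintro hi
  rw [h, map_mul, map_prod, Finset.prod_eq_zero (Finset.mem_univ i)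
    (by rw [eval_linForm, hi, zero_dotProduct]), mul_zero] at hx
  exact hx rfl

theorem squarefreeRough_subset {z z' : ℝ} (h : z ≤ z') (X : ℝ) :
    squarefreeRough z' X ⊆ squarefreeRough z X := fun u hu => by
  rw [mem_squarefreeRough] at hu ⊢
  exact ⟨hu.1, hu.2.1, fun p hp => h.trans_lt (hu.2.2 p hp)⟩

theorem not_natCast_dvd_of_abs_lt {N : ℤ} (hN : N ≠ 0) {p : ℕ} (h : (|N| : ℝ) < p) :
    ¬ (p : ℤ) ∣ N := fun hdvd =>
  (Int.le_of_dvd (abs_pos.2 hN) ((dvd_abs _ _).2 hdvd)).not_gt (by exact_mod_cast h)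

theorem exists_linear_factor_majorant (hn : 2 ≤ n) (hd : n ≤ d) (hF : IsDecomp F L)
    (hirr : Irreducible (F.map (Int.castRingHom ℚ))) (hΔ : discProd L ≠ 0) :
    ∃ (z C : ℝ) (D : ℕ) (g : ℕ → ℕ), 0 ≤ C ∧ (∀ p, p.Prime → g p ≤ D) ∧
      (∀ X, 0 ≤ X → ∑ u ∈ squarefreeRough z X, ∏ p ∈ u.primeFactors, (g p : ℝ) ≤ C * X) ∧
      ∀ p : ℕ, p.Prime → z < p → ∀ (t : ℕ) (c : Fin t → Fin n → ZMod p) (G : MvPolynomial _ _),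
        F.map (Int.castRingHom (ZMod p)) = G * ∏ i, linForm (c i) → t ≤ g p ∧ ∀ i, c i ≠ 0 := by
  obtain ⟨a, b, ha, x, hx, hline⟩ := exists_restrictLine_eq_minpoly hn hd hF hirr hΔ
  have hsepQ : ((minpoly ℤ x).map (Int.castRingHom ℚ)).Separable :=
    ((minpoly.monic hx).irreducible_iff_irreducible_map_fraction_map.1
      (minpoly.irreducible hx)).separable
  obtain ⟨N, hN, hsep⟩ := exists_separable_map_zmod hsepQ
  obtain ⟨z, C, hC, hsum⟩ := exists_sum_prod_modRootCount_le hx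
  set z' := max z (max (|eval a F| : ℝ) (|N| : ℝ)) with hz'
  refine ⟨z', C, (minpoly ℤ x).natDegree, modRootCount (minpoly ℤ x), hC, fun p hp => ?_,
    fun X hX => ?_, fun p hp hzp t c G hfac => ?_⟩
  · have := Fact.mk hp
    exact modRootCount_le_natDegree (Polynomial.map_monic_ne_zero (minpoly.monic hx))
  · exact (Finset.sum_le_sum_of_subset_of_nonneg (squarefreeRough_subset (le_max_left _ _) X)
      fun u _ _ => by positivity).trans (hsum X hX)
  · have := Fact.mk hp
    simp only [hz', max_lt_iff] at hzp
    have hpa : ¬ (p : ℤ) ∣ eval a F := not_natCast_dvd_of_abs_lt ha hzp.2.1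
    have hpN : ¬ (p : ℤ) ∣ N := not_natCast_dvd_of_abs_lt hN hzp.2.2
    refine ⟨?_, linForm_ne_zero_of_eval_ne_zero hfac (x := Int.cast ∘ a) ?_⟩
    · simpa using card_le_modRootCount_of_map_eq_mul_prod_linForm hline hpa (hsep p hp hpN) hfac
    · rwa [← ZMod.intCast_zmod_eq_zero_iff_dvd, ← eq_intCast (Int.castRingHom (ZMod p)),
        map_eval] at hpa

end LinearFactors

section LocalDensity

theorem ncard_dotProduct_eq_zero_mul_card {K ι : Type*} [Field K] [Finite K] [Fintype ι]
    {c : ι → K} (hc : c ≠ 0) :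
    {x | c ⬝ᵥ x = 0}.ncard * Nat.card K = Nat.card K ^ Fintype.card ι := by
  classical
  obtain ⟨i, hi⟩ := Function.ne_iff.1 hc
  let f : (ι → K) →+ K := AddMonoidHom.mk' (c ⬝ᵥ ·) (dotProduct_add c)
  have hf : Function.Surjective f := fun s =>
    ⟨Pi.single i ((c i)⁻¹ * s), by simp [f, mul_inv_cancel_left₀ hi]⟩
  have hindex : f.ker.index = Nat.card K := by
    rw [AddSubgroup.index_ker, AddMonoidHom.range_eq_top.2 hf, AddSubgroup.card_top]
  rw [← hindex, ← Nat.card_coe_set_eq]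
  exact (AddSubgroup.card_mul_index f.ker).trans
    (by rw [Nat.card_fun, hindex, Nat.card_eq_fintype_card (α := ι)])

theorem ncard_exists_dotProduct_eq_zero_mul_card_le {K ι σ : Type*} [Field K] [Finite K]
    [Fintype ι] [Fintype σ] {c : σ → ι → K} (hc : ∀ s, c s ≠ 0) :
    {x | ∃ s, c s ⬝ᵥ x = 0}.ncard * Nat.card K ≤
      Fintype.card σ * Nat.card K ^ Fintype.card ι := by
  calc {x | ∃ s, c s ⬝ᵥ x = 0}.ncard * Nat.card K
      ≤ (∑ s, {x | c s ⬝ᵥ x = 0}.ncard) * Nat.card K := by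
        rw [Set.ofPred_exists]
        gcongr
        exact Set.ncard_iUnion_le_of_fintype _
    _ = Fintype.card σ * Nat.card K ^ Fintype.card ι := by
        rw [Finset.sum_mul, Finset.sum_congr rfl fun s _ =>
          ncard_dotProduct_eq_zero_mul_card (hc s), Finset.sum_const, smul_eq_mul, Finset.card_univ]

theorem zmod_eq_of_cast_eq {l m u : ℕ} (hl : l = m * u) (hu : Squarefree u) (hmu : m.Coprime u)
    {x y : ZMod l} (hm : (x.cast : ZMod m) = y.cast)
    (hp : ∀ p ∈ u.primeFactors, (x.cast : ZMod p) = y.cast) : x = y := by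
  obtain ⟨a, rfl⟩ := ZMod.intCast_surjective x
  obtain ⟨b, rfl⟩ := ZMod.intCast_surjective y
  have hcast {q : ℕ} (hq : q ∣ l) (h : ((a : ZMod l).cast : ZMod q) = (b : ZMod l).cast) :
      (q : ℤ) ∣ b - a := by
    rwa [ZMod.cast_intCast hq, ZMod.cast_intCast hq, ZMod.intCast_eq_intCast_iff_dvd_sub] at h
  have hmdvd : (m : ℤ) ∣ b - a := hcast (hl ▸ dvd_mul_right m u) hm
  have hudvd : (u : ℤ) ∣ b - a := by
    rw [← Nat.prod_primeFactors_of_squarefree hu, Nat.cast_prod]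
    refine Finset.prod_dvd_of_coprime (fun p hp q hq hpq => Nat.isCoprime_iff_coprime.2 <|
      (Nat.coprime_primes (Nat.prime_of_mem_primeFactors hp)
        (Nat.prime_of_mem_primeFactors hq)).2 hpq) fun p hpu => ?_
    exact hcast (hl ▸ (Nat.dvd_of_mem_primeFactors hpu).mul_left m) (hp p hpu)
  rw [ZMod.intCast_eq_intCast_iff_dvd_sub, hl, Nat.cast_mul]
  exact (Nat.isCoprime_iff_coprime.2 hmu).mul_dvd hmdvd hudvd

theorem ncard_div_pow_le_prod_ncard_div_pow {ι : Type*} [Fintype ι] {l m u : ℕ} [NeZero m]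
    (hl : l = m * u) (hu : Squarefree u) (hmu : m.Coprime u)
    {Z : ∀ p : ℕ, Set (ι → ZMod p)} {R : Set (ι → ZMod l)}
    (hR : ∀ x ∈ R, ∀ p ∈ u.primeFactors, (fun i => ((x i).cast : ZMod p)) ∈ Z p) :
    (R.ncard : ℝ) / (l : ℝ) ^ Fintype.card ι ≤
      ∏ p ∈ u.primeFactors, ((Z p).ncard / (p : ℝ) ^ Fintype.card ι : ℝ) := by
  classical
  have (p : u.primeFactors) : NeZero (p : ℕ) :=
    ⟨(Nat.prime_of_mem_primeFactors p.2).ne_zero⟩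
  let reduce (x : ι → ZMod l) : (ι → ZMod m) × (∀ p : u.primeFactors, ι → ZMod p) :=
    (fun i => (x i).cast, fun p i => (x i).cast)
  have hmaps : ∀ x ∈ R, reduce x ∈ (Set.univ : Set (ι → ZMod m)) ×ˢ
      Set.univ.pi fun p : u.primeFactors => Z p :=
    fun x hx => ⟨Set.mem_univ _, fun p _ => hR x hx p p.2⟩
  have hinj : Set.InjOn reduce R := fun x _ y _ hxy => funext fun i =>
    zmod_eq_of_cast_eq hl hu hmu (congrFun (congrArg Prod.fst hxy) i) fun p hp =>
      congrFun (congrFun (congrArg Prod.snd hxy) ⟨p, hp⟩) i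
  have hcard : R.ncard ≤ m ^ Fintype.card ι * ∏ p : u.primeFactors, (Z p).ncard := by
    refine (Set.ncard_le_ncard_of_injOn reduce hmaps hinj (Set.toFinite _)).trans_eq ?_
    rw [Set.ncard_prod, Set.ncard_univ, Nat.card_fun, Nat.card_zmod, Nat.card_eq_fintype_card]
    simp only [← Nat.card_coe_set_eq]
    rw [Nat.card_congr (Equiv.Set.univPi _), Nat.card_pi]
  have hu' : (u : ℝ) ^ Fintype.card ι = ∏ p ∈ u.primeFactors, (p : ℝ) ^ Fintype.card ι := by
    rw [Finset.prod_pow, ← Nat.cast_prod, Nat.prod_primeFactors_of_squarefree hu]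
  have hl' : (l : ℝ) ^ Fintype.card ι = (m : ℝ) ^ Fintype.card ι * (u : ℝ) ^ Fintype.card ι := by
    rw [hl, Nat.cast_mul, mul_pow]
  have hm : (0 : ℝ) < m := Nat.cast_pos.2 (NeZero.pos m)
  have hu₀ : (0 : ℝ) < u := Nat.cast_pos.2 hu.ne_zero.bot_lt
  rw [Finset.prod_div_distrib, ← hu', hl', ← div_div, ← Finset.prod_coe_sort]
  gcongr
  rw [div_le_iff₀' (by positivity)]
  exact_mod_cast hcard

theorem exists_dotProduct_eq_zero_of_not_Sp {n p t : ℕ} {F : MvPolynomial (Fin n) ℤ}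
    {hp : p.Prime} {ℓ : Fin t → Fin n → @PadicInt p ⟨hp⟩}
    {G : MvPolynomial (Fin n) (@PadicInt p ⟨hp⟩)}
    (h : F.map (Int.castRingHom (@PadicInt p ⟨hp⟩)) = G * ∏ i, linForm (ℓ i)) {a : Fin n → ℤ}
    (ha : (p : ℤ) ∣ eval a F) (hS : ¬ Sp p hp ℓ G fun i => (a i : ZMod p)) :
    ∃ i, (@PadicInt.toZMod p ⟨hp⟩ ∘ ℓ i) ⬝ᵥ (fun j => (a j : ZMod p)) = 0 := by
  have := Fact.mk hp
  have hzero : eval (Int.cast ∘ a) (F.map (Int.castRingHom (ZMod p))) = 0 := by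
    refine (map_eval (Int.castRingHom (ZMod p)) a F).symm.trans ?_
    rwa [eq_intCast, ZMod.intCast_zmod_eq_zero_iff_dvd]
  rw [map_intCast_eq_mul_prod_linForm PadicInt.toZMod h, map_mul, map_prod, mul_eq_zero,
    Finset.prod_eq_zero_iff] at hzero
  obtain hG | ⟨i, -, hi⟩ := hzero
  · exact absurd (Or.inr hG) hS
  · exact ⟨i, by rwa [eval_linForm] at hi⟩

theorem ncard_Rset_div_le {n : ℕ} {F : MvPolynomial (Fin n) ℤ}
    {τ : ∀ p : ℕ, p.Prime → ℕ}
    {𝓛 : ∀ (p : ℕ) (hp : p.Prime), Fin (τ p hp) → Fin n → @PadicInt p ⟨hp⟩}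
    {Fstar : ∀ (p : ℕ) (hp : p.Prime), MvPolynomial (Fin n) (@PadicInt p ⟨hp⟩)}
    (hfact : ∀ (p : ℕ) (hp : p.Prime),
      F.map (Int.castRingHom (@PadicInt p ⟨hp⟩)) = Fstar p hp * ∏ i, linForm (𝓛 p hp i))
    {k u₁ u₂ D : ℕ} (hu₁ : u₁ ≠ 0) (hD : D ≠ 0) (hsq : Squarefree u₂)
    (hcop : (u₁ * D).Coprime u₂) {g : ℕ → ℕ}
    (hg : ∀ (p : ℕ) (hp : p.Prime), p ∣ u₂ →
      τ p hp ≤ g p ∧ ∀ i, @PadicInt.toZMod p ⟨hp⟩ ∘ 𝓛 p hp i ≠ 0) :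
    ((Rset F 𝓛 Fstar k u₁ u₂ D).ncard : ℝ) / ((u₁ * u₂ * D : ℕ) : ℝ) ^ n ≤
      ∏ p ∈ u₂.primeFactors, (g p : ℝ) / p := by
  have : NeZero (u₁ * D) := ⟨mul_ne_zero hu₁ hD⟩
  let Z (p : ℕ) : Set (Fin n → ZMod p) :=
    {x | ∃ (hp : p.Prime) (i : Fin (τ p hp)), (@PadicInt.toZMod p ⟨hp⟩ ∘ 𝓛 p hp i) ⬝ᵥ x = 0}
  have hZ (p) (hpu : p ∈ u₂.primeFactors) : ((Z p).ncard / (p : ℝ) ^ n : ℝ) ≤ g p / p := by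
    obtain ⟨hp, hdvd, -⟩ := Nat.mem_primeFactors.1 hpu
    have := Fact.mk hp
    have hcard := ncard_exists_dotProduct_eq_zero_mul_card_le (hg p hp hdvd).2
    rw [Fintype.card_fin, Fintype.card_fin, Nat.card_zmod] at hcard
    have hp0 : (0 : ℝ) < p := Nat.cast_pos.2 hp.pos
    rw [div_le_div_iff₀ (by positivity) hp0]
    simp only [Z, exists_prop_of_true hp]
    exact_mod_cast hcard.trans (Nat.mul_le_mul_right _ (hg p hp hdvd).1)
  have hR : ∀ x ∈ Rset F 𝓛 Fstar k u₁ u₂ D, ∀ p ∈ u₂.primeFactors,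
      (fun i => ((x i).cast : ZMod p)) ∈ Z p := by
    rintro x ⟨a, hax, -, hu₂, -, hS⟩ p hpu
    obtain ⟨hp, hdvd, -⟩ := Nat.mem_primeFactors.1 hpu
    obtain ⟨i, hi⟩ := exists_dotProduct_eq_zero_of_not_Sp (hfact p hp)
      ((Int.natCast_dvd_natCast.2 hdvd).trans hu₂) (hS p hp (hdvd.mul_left _))
    refine ⟨hp, i, ?_⟩
    simpa only [← hax, ZMod.cast_intCast ((hdvd.mul_left u₁).mul_right D)] using hi
  have hdensity := ncard_div_pow_le_prod_ncard_div_pow (by ring) hsq hcop hR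
  rw [Fintype.card_fin] at hdensity
  exact hdensity.trans (Finset.prod_le_prod (fun p _ => by positivity) hZ)

end LocalDensity

section Tails

variable {c b s : ℝ}

theorem monotoneOn_div_log : MonotoneOn (fun x : ℝ => x / Real.log x) (Set.Ici (Real.exp 1)) := by
  intro x hx y hy hxy
  have : 0 < x := (Real.exp_pos 1).trans_le hx
  have hy₀ : 0 < y := (Real.exp_pos 1).trans_le hy
  have hlog : 0 < Real.log y := one_pos.trans_le ((Real.le_log_iff_exp_le hy₀).2 hy)
  simpa only [inv_div] using inv_anti₀ (by positivity) (Real.log_div_self_antitoneOn hx hy hxy)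

theorem eventually_add_one_pow_mul_sq_le_exp (hc : 0 < c) (A : ℕ) :
    ∀ᶠ x : ℝ in atTop, (x + 1) ^ A * x ^ 2 ≤ Real.exp (c * (x / Real.log x)) := by
  have hlog_sq := (Real.isLittleO_pow_log_id_atTop (n := 2)).bound
    (show 0 < c / (2 * A + 2) by positivity)
  filter_upwards [hlog_sq, eventually_ge_atTop (Real.exp 1), eventually_ge_atTop 2] with x hx he h2
  have hx₀ : 0 < x := by linarith
  have hlog : 1 ≤ Real.log x := (Real.le_log_iff_exp_le hx₀).2 he
  rw [Real.norm_of_nonneg (by positivity), id_eq, Real.norm_of_nonneg hx₀.le, div_mul_eq_mul_div,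
    le_div_iff₀ (by positivity)] at hx
  calc (x + 1) ^ A * x ^ 2 ≤ (x ^ 2) ^ A * x ^ 2 := by gcongr; nlinarith
    _ = Real.exp ((2 * A + 2) * Real.log x) := by
        rw [mul_comm _ (Real.log x), Real.exp_mul, Real.exp_log hx₀, ← pow_mul, ← pow_add]
        norm_cast
    _ ≤ Real.exp (c * (x / Real.log x)) := by
        rw [Real.exp_le_exp, mul_div_assoc', le_div_iff₀ (by linarith)]
        linarith

theorem eventually_exp_div_log_le_pow (hb : 1 < b) (hc : 0 ≤ c) (hs : 1 ≤ s) {N : ℝ → ℕ}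
    (hN : ∀ᶠ y : ℝ in atTop, c * (y / Real.log y) ≤ N y) :
    ∀ᶠ x : ℝ in atTop, Real.exp (Real.log b * c / s * (x / Real.log x)) ≤ b ^ N (x / s) := by
  have hs₀ : 0 < s := by linarith
  filter_upwards [(tendsto_id.atTop_div_const hs₀).eventually hN, eventually_gt_atTop s]
    with x hNx hxs
  have hlogb : 0 ≤ Real.log b := (Real.log_pos hb).le
  have hx₀ : 0 < x := by linarith
  have hpos : 0 < Real.log (x / s) := Real.log_pos ((one_lt_div hs₀).2 hxs)
  have hle : Real.log (x / s) ≤ Real.log x :=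
    Real.log_le_log (by positivity) (div_le_self hx₀.le hs)
  rw [← Real.rpow_natCast, Real.rpow_def_of_pos (by linarith), Real.exp_le_exp]
  calc Real.log b * c / s * (x / Real.log x)
      = Real.log b * (c * (x / s / Real.log x)) := by ring
    _ ≤ Real.log b * (c * (x / s / Real.log (x / s))) := by gcongr
    _ ≤ Real.log b * N (x / s) := by gcongr; exact hNx

theorem exists_sum_add_one_pow_div_pow_le (hb : 1 < b) (hc : 0 < c) (hs : 1 ≤ s) {N : ℝ → ℕ}
    (hN : ∀ᶠ y : ℝ in atTop, c * (y / Real.log y) ≤ N y) (A : ℕ) :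
    ∃ K : ℝ, 0 < K ∧ ∀ᶠ x : ℝ in atTop, ∀ J : Finset ℕ, (∀ j ∈ J, x ≤ (j : ℝ)) →
      ∑ j ∈ J, ((j : ℝ) + 1) ^ A / b ^ N (j / s) ≤
        K * Real.exp (-(Real.log b * c / (2 * s) * (x / Real.log x))) := by
  set c' := Real.log b * c / (2 * s) with hc'
  have hc'₀ : 0 < c' := by have := Real.log_pos hb; positivity
  have hsum : Summable fun j : ℕ => 1 / (j : ℝ) ^ 2 := Real.summable_one_div_nat_pow.2 one_lt_two
  have hterm : ∀ᶠ x : ℝ in atTop,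
      (x + 1) ^ A / b ^ N (x / s) ≤ 1 / x ^ 2 * Real.exp (-(c' * (x / Real.log x))) := by
    filter_upwards [eventually_exp_div_log_le_pow hb hc.le hs hN,
      eventually_add_one_pow_mul_sq_le_exp hc'₀ A, eventually_gt_atTop 0] with x hpow hpoly hx₀
    rw [show Real.log b * c / s = c' + c' by rw [hc']; ring, add_mul, Real.exp_add] at hpow
    rw [Real.exp_neg, one_div, ← mul_inv, ← one_div, div_le_div_iff₀ (by positivity)
      (by positivity), one_mul, ← mul_assoc]
    exact (mul_le_mul_of_nonneg_right hpoly (by positivity)).trans hpow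
  obtain ⟨x₀, hx₀⟩ := eventually_atTop.1 hterm
  refine ⟨∑' j : ℕ, 1 / (j : ℝ) ^ 2, hsum.tsum_pos (fun _ => by positivity) 1 (by simp), ?_⟩
  filter_upwards [eventually_ge_atTop x₀, eventually_ge_atTop (Real.exp 1)] with x hx he J hJ
  calc ∑ j ∈ J, ((j : ℝ) + 1) ^ A / b ^ N (j / s)
      ≤ ∑ j ∈ J, 1 / (j : ℝ) ^ 2 * Real.exp (-(c' * (x / Real.log x))) := by
        refine Finset.sum_le_sum fun j hj => (hx₀ j (hx.trans (hJ j hj))).trans ?_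
        gcongr _ * Real.exp (-(c' * ?_))
        exact monotoneOn_div_log he (he.trans (hJ j hj)) (hJ j hj)
    _ ≤ (∑' j : ℕ, 1 / (j : ℝ) ^ 2) * Real.exp (-(c' * (x / Real.log x))) := by
        rw [← Finset.sum_mul]
        gcongr
        exact hsum.sum_le_tsum J fun _ _ => by positivity

end Tails

/-- The primes `p ≤ y` with `p ≡ 1 (mod k)`, from which the prime factors of `𝒟(u₂)` are taken. -/
def primesOneMod (k : ℕ) (y : ℝ) : Finset ℕ :=
  {p ∈ Finset.Ioc 0 ⌊y⌋₊ | p.Prime ∧ (p : ZMod k) = 1}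

section SieveModulus

variable {k : ℕ} {ξ B : ℝ} {u : ℕ}

theorem mem_primesOneMod (hk : 1 < k) {p : ℕ} {y : ℝ} :
    p ∈ primesOneMod k y ↔ p.Prime ∧ (p : ℝ) ≤ y ∧ p % k = 1 := by
  have hmod : (p : ZMod k) = 1 ↔ p % k = 1 := by
    rw [← Nat.cast_one, ZMod.natCast_eq_natCast_iff', Nat.mod_eq_of_lt hk]
  rw [primesOneMod, Finset.mem_filter, Finset.mem_Ioc, hmod, and_left_comm]
  refine and_congr_right fun hp => and_congr_left fun _ => ?_
  rw [and_iff_right hp.pos, Nat.le_floor_iff' hp.ne_zero]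

theorem scrD_eq_prod (hk : 1 < k) : scrD k ξ B u =
    ∏ p ∈ (primesOneMod k (Real.log (B ^ 2 / u) / 12)).filter
      (fun p : ℕ => ξ < (p : ℝ) ∧ ¬ p ∣ u), p := by
  rw [scrD, ← finprod_mem_coe_finset]
  congr! 3 with p
  simp only [Finset.coe_filter, mem_primesOneMod hk, Set.mem_ofPred_eq]
  tauto

theorem scrD_ne_zero (hk : 1 < k) : scrD k ξ B u ≠ 0 := by
  rw [scrD_eq_prod hk]
  exact Finset.prod_ne_zero_iff.2 fun p hp =>
    ((mem_primesOneMod hk).1 (Finset.mem_filter.1 hp).1).1.ne_zero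

theorem mem_primeFactors_scrD (hk : 1 < k) {p : ℕ} : p ∈ (scrD k ξ B u).primeFactors ↔
    p ∈ primesOneMod k (Real.log (B ^ 2 / u) / 12) ∧ ξ < (p : ℝ) ∧ ¬ p ∣ u := by
  rw [scrD_eq_prod hk, Nat.primeFactors_prod fun p hp =>
    ((mem_primesOneMod hk).1 (Finset.mem_filter.1 hp).1).1, Finset.mem_filter]

theorem coprime_scrD (hk : 1 < k) : (scrD k ξ B u).Coprime u :=
  Nat.coprime_of_dvd fun _ hp hpD hpu =>
    ((mem_primeFactors_scrD hk).1 (Nat.mem_primeFactors.2 ⟨hp, hpD, scrD_ne_zero hk⟩)).2.2 hpu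

theorem card_primesOneMod_le (hk : 1 < k) (hu : u ≠ 0) {j : ℕ}
    (hj : (j : ℝ) ≤ Real.log (B ^ 2 / u)) :
    (primesOneMod k (j / 12)).card ≤ (scrD k ξ B u).primeFactors.card + ⌊ξ⌋₊ +
      (u.primeFactors.filter (· ≤ j)).card := by
  have hsub : primesOneMod k (j / 12) ⊆ (scrD k ξ B u).primeFactors ∪ Finset.Ioc 0 ⌊ξ⌋₊ ∪
      u.primeFactors.filter (· ≤ j) := by
    intro p hp
    obtain ⟨hpp, hpj, hpk⟩ := (mem_primesOneMod hk).1 hp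
    rw [Finset.mem_union, Finset.mem_union]
    by_cases hpu : p ∣ u
    · have : (p : ℝ) ≤ j := hpj.trans (div_le_self j.cast_nonneg (by norm_num))
      exact .inr (Finset.mem_filter.2 ⟨Nat.mem_primeFactors.2 ⟨hpp, hpu, hu⟩, mod_cast this⟩)
    by_cases hpξ : ξ < p
    · refine .inl (.inl ((mem_primeFactors_scrD hk).2 ⟨(mem_primesOneMod hk).2 ?_, hpξ, hpu⟩))
      exact ⟨hpp, by linarith, hpk⟩
    · exact .inl (.inr (Finset.mem_Ioc.2 ⟨hpp.pos, Nat.le_floor (not_lt.1 hpξ)⟩))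
  calc (primesOneMod k (j / 12)).card
      ≤ _ := Finset.card_le_card hsub
    _ ≤ _ := Finset.card_union_le _ _
    _ ≤ _ := by
        gcongr
        simpa using Finset.card_union_le (scrD k ξ B u).primeFactors (Finset.Ioc 0 ⌊ξ⌋₊)

end SieveModulus

section LogBlocks

variable {k : ℕ} {ξ B : ℝ} {g : ℕ → ℝ}

theorem prod_div_pow_card_scrD_le (hk : 1 < k) (hg : ∀ p, 0 ≤ g p) (hB : 0 < B) {u j : ℕ}
    (hu : Squarefree u) (hj : (j : ℝ) ≤ Real.log (B ^ 2 / u))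
    (hj' : Real.log (B ^ 2 / u) ≤ j + 1) :
    (∏ p ∈ u.primeFactors, g p / p) / (k : ℝ) ^ (scrD k ξ B u).primeFactors.card ≤
      Real.exp (j + 1) / B ^ 2 * (k : ℝ) ^ ⌊ξ⌋₊ / (k : ℝ) ^ (primesOneMod k (j / 12)).card *
        ((∏ p ∈ u.primeFactors, g p) * (k : ℝ) ^ (u.primeFactors.filter (· ≤ j)).card) := by
  have hk₀ : (0 : ℝ) < k := mod_cast one_pos.trans hk
  have hu₀ : (0 : ℝ) < u := mod_cast Nat.pos_of_ne_zero hu.ne_zero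
  have hG : 0 ≤ ∏ p ∈ u.primeFactors, g p := Finset.prod_nonneg fun p _ => hg p
  have hpow : (k : ℝ) ^ (primesOneMod k (j / 12)).card ≤
      (k : ℝ) ^ (scrD k ξ B u).primeFactors.card * (k : ℝ) ^ ⌊ξ⌋₊ *
        (k : ℝ) ^ (u.primeFactors.filter (· ≤ j)).card := by
    rw [← pow_add, ← pow_add]
    exact pow_le_pow_right₀ (mod_cast hk.le) (card_primesOneMod_le hk hu.ne_zero hj)
  have hinv : (u : ℝ)⁻¹ ≤ Real.exp (j + 1) / B ^ 2 := by
    rw [Real.log_le_iff_le_exp (by positivity), div_le_iff₀ hu₀] at hj'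
    rw [le_div_iff₀ (by positivity), inv_mul_le_iff₀ hu₀]
    linarith
  rw [Finset.prod_div_distrib, ← Nat.cast_prod, Nat.prod_primeFactors_of_squarefree hu,
    div_le_iff₀ (by positivity)]
  set q := (k : ℝ) ^ (primesOneMod k (j / 12)).card
  have hq : 0 < q := by positivity
  calc (∏ p ∈ u.primeFactors, g p) / (u : ℝ)
      = (∏ p ∈ u.primeFactors, g p) * (u : ℝ)⁻¹ * (q / q) := by
        rw [div_self hq.ne', mul_one, div_eq_mul_inv]
    _ ≤ (∏ p ∈ u.primeFactors, g p) * (Real.exp (j + 1) / B ^ 2) *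
        ((k : ℝ) ^ (scrD k ξ B u).primeFactors.card * (k : ℝ) ^ ⌊ξ⌋₊ *
          (k : ℝ) ^ (u.primeFactors.filter (· ≤ j)).card / q) := by gcongr
    _ = _ := by ring

variable {z C X : ℝ} {D : ℕ} {U : Finset ℕ}

theorem sum_block_prod_div_pow_card_scrD_le (hk : 1 < k) (hC : 0 ≤ C) (hg : ∀ p, 0 ≤ g p)
    (hgD : ∀ p, p.Prime → g p ≤ D)
    (hsum : ∀ X, 0 ≤ X → ∑ u ∈ squarefreeRough z X, ∏ p ∈ u.primeFactors, g p ≤ C * X)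
    (hB : 0 < B) (hU : U ⊆ squarefreeRough z X) {j : ℕ}
    (hj : ∀ u ∈ U, (j : ℝ) ≤ Real.log (B ^ 2 / u) ∧ Real.log (B ^ 2 / u) ≤ j + 1) :
    ∑ u ∈ U, (∏ p ∈ u.primeFactors, g p / p) / (k : ℝ) ^ (scrD k ξ B u).primeFactors.card ≤
      Real.exp 1 * C * (k : ℝ) ^ ⌊ξ⌋₊ *
        (((j : ℝ) + 1) ^ (k * D) / (k : ℝ) ^ (primesOneMod k (j / 12)).card) := by
  set Y := B ^ 2 * Real.exp (-j) with hY
  set M := Real.exp (j + 1) / B ^ 2 * (k : ℝ) ^ ⌊ξ⌋₊ /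
    (k : ℝ) ^ (primesOneMod k (j / 12)).card with hM
  have hsub : U ⊆ squarefreeRough z Y := by
    intro u hu
    obtain ⟨-, hsq, hz⟩ := mem_squarefreeRough.1 (hU hu)
    have hu₀ : (0 : ℝ) < u := mod_cast Nat.pos_of_ne_zero hsq.ne_zero
    refine mem_squarefreeRough.2 ⟨?_, hsq, hz⟩
    have hexp := (Real.le_log_iff_exp_le (by positivity)).1 (hj u hu).1
    rw [le_div_iff₀ hu₀] at hexp
    rwa [hY, Real.exp_neg, ← div_eq_mul_inv, le_div_iff₀' (Real.exp_pos _)]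
  calc ∑ u ∈ U, (∏ p ∈ u.primeFactors, g p / p) / (k : ℝ) ^ (scrD k ξ B u).primeFactors.card
      ≤ ∑ u ∈ U, M *
          ((∏ p ∈ u.primeFactors, g p) * (k : ℝ) ^ (u.primeFactors.filter (· ≤ j)).card) :=
        Finset.sum_le_sum fun u hu => prod_div_pow_card_scrD_le hk hg hB
          (mem_squarefreeRough.1 (hU hu)).2.1 (hj u hu).1 (hj u hu).2
    _ ≤ ∑ u ∈ squarefreeRough z Y, M *
          ((∏ p ∈ u.primeFactors, g p) * (k : ℝ) ^ (u.primeFactors.filter (· ≤ j)).card) :=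
        Finset.sum_le_sum_of_subset_of_nonneg hsub fun u _ _ =>
          have := Finset.prod_nonneg fun p (_ : p ∈ u.primeFactors) => hg p
          by positivity
    _ ≤ M * (C * ((j : ℝ) + 1) ^ (k * D) * Y) := by
        rw [← Finset.mul_sum]
        gcongr
        exact sum_squarefreeRough_prod_mul_pow_card_le hC hg hgD hsum k j (by positivity)
    _ = _ := by
        rw [hM, hY, Real.exp_add, Real.exp_neg]
        field_simp

theorem sum_prod_div_pow_card_scrD_le (hk : 1 < k) (hC : 0 ≤ C) (hg : ∀ p, 0 ≤ g p)
    (hgD : ∀ p, p.Prime → g p ≤ D)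
    (hsum : ∀ X, 0 ≤ X → ∑ u ∈ squarefreeRough z X, ∏ p ∈ u.primeFactors, g p ≤ C * X)
    (hB : 0 < B) (hU : U ⊆ squarefreeRough z X) (hlog : ∀ u ∈ U, 0 ≤ Real.log (B ^ 2 / u)) :
    ∑ u ∈ U, (∏ p ∈ u.primeFactors, g p / p) / (k : ℝ) ^ (scrD k ξ B u).primeFactors.card ≤
      Real.exp 1 * C * (k : ℝ) ^ ⌊ξ⌋₊ *
        ∑ j ∈ U.image (fun u : ℕ => ⌊Real.log (B ^ 2 / u)⌋₊),
          ((j : ℝ) + 1) ^ (k * D) / (k : ℝ) ^ (primesOneMod k (j / 12)).card := by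
  rw [← Finset.sum_fiberwise_of_maps_to fun u hu =>
    Finset.mem_image_of_mem (fun u : ℕ => ⌊Real.log (B ^ 2 / u)⌋₊) hu, Finset.mul_sum]
  refine Finset.sum_le_sum fun j _ => sum_block_prod_div_pow_card_scrD_le hk hC hg hgD hsum hB
    ((Finset.filter_subset _ U).trans hU) fun u hu => ?_
  obtain ⟨huU, rfl⟩ := Finset.mem_filter.1 hu
  exact ⟨Nat.floor_le (hlog u huU), (Nat.lt_floor_add_one _).le⟩

end LogBlocks

theorem pow_floor_le_exp {k : ℕ} (hk : 1 ≤ k) {ξ : ℝ} (hξ : 0 ≤ ξ) :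
    (k : ℝ) ^ ⌊ξ⌋₊ ≤ Real.exp (((k : ℝ) - 1) * ξ) := by
  have hk₁ : (0 : ℝ) ≤ (k : ℝ) - 1 := sub_nonneg.2 (mod_cast hk)
  calc (k : ℝ) ^ ⌊ξ⌋₊
      ≤ Real.exp ((k : ℝ) - 1) ^ ⌊ξ⌋₊ := by
        gcongr
        linarith [Real.add_one_le_exp ((k : ℝ) - 1)]
    _ = Real.exp (((k : ℝ) - 1) * ⌊ξ⌋₊) := by rw [mul_comm, Real.exp_nat_mul]
    _ ≤ Real.exp (((k : ℝ) - 1) * ξ) := by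
        gcongr
        exact Nat.floor_le hξ

theorem card_divisors_prod_prime_pow {S : Finset ℕ} (hS : ∀ p ∈ S, p.Prime) (e : ℕ) :
    (∏ p ∈ S, p ^ e).divisors.card = (e + 1) ^ S.card := by
  induction S using Finset.induction_on with
  | empty => simp
  | insert q S hq ih =>
    have hqp := hS q (Finset.mem_insert_self q S)
    have hSp : ∀ p ∈ S, p.Prime := fun p hp => hS p (Finset.mem_insert_of_mem hp)
    have hcop : Nat.Coprime (q ^ e) (∏ p ∈ S, p ^ e) :=
      Nat.Coprime.prod_right fun p hp => Nat.Coprime.pow _ _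
        ((Nat.coprime_primes hqp (hSp p hp)).2 fun h => hq (h ▸ hp))
    rw [Finset.prod_insert hq, hcop.card_divisors_mul, ih hSp, Nat.divisors_prime_pow hqp,
      Finset.card_map, Finset.card_range, Finset.card_insert_of_notMem hq, pow_succ, mul_comm]

theorem Cxi_eq_prod (k : ℕ) (ξ : ℝ) :
    Cxi k ξ = ∏ p ∈ (Finset.Ioc 0 ⌊ξ⌋₊).filter Nat.Prime, p ^ (k - 1) := by
  rw [Cxi, ← finprod_mem_coe_finset]
  congr! 3 with p
  simp only [Finset.coe_filter, Finset.mem_Ioc, Set.mem_ofPred_eq]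
  exact ⟨fun ⟨hp, hpξ⟩ => ⟨⟨hp.pos, Nat.le_floor hpξ⟩, hp⟩,
    fun ⟨⟨_, hpξ⟩, hp⟩ => ⟨hp, (Nat.le_floor_iff' hp.ne_zero).1 hpξ⟩⟩

theorem Cxi_ne_zero (k : ℕ) (ξ : ℝ) : Cxi k ξ ≠ 0 := by
  rw [Cxi_eq_prod]
  exact Finset.prod_ne_zero_iff.2 fun p hp => pow_ne_zero _ (Finset.mem_filter.1 hp).2.ne_zero

theorem le_of_prime_of_dvd_Cxi {k p : ℕ} {ξ : ℝ} (hp : p.Prime) (h : p ∣ Cxi k ξ) :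
    (p : ℝ) ≤ ξ := by
  rw [Cxi_eq_prod, hp.prime.dvd_finsetProd_iff] at h
  obtain ⟨q, hq, hpq⟩ := h
  obtain ⟨hq, hqp⟩ := Finset.mem_filter.1 hq
  rw [(Nat.prime_dvd_prime_iff_eq hp hqp).1 (hp.dvd_of_dvd_pow hpq)]
  exact (Nat.le_floor_iff' hqp.ne_zero).1 (Finset.mem_Ioc.1 hq).2

theorem card_divisors_Cxi_le {k : ℕ} (hk : 1 ≤ k) {ξ : ℝ} (hξ : 0 ≤ ξ) :
    ((Cxi k ξ).divisors.card : ℝ) ≤ Real.exp (((k : ℝ) - 1) * ξ) := by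
  have hcard : ((Finset.Ioc 0 ⌊ξ⌋₊).filter Nat.Prime).card ≤ ⌊ξ⌋₊ := by
    simpa using Finset.card_filter_le (Finset.Ioc 0 ⌊ξ⌋₊) Nat.Prime
  rw [Cxi_eq_prod, card_divisors_prod_prime_pow fun p hp => (Finset.mem_filter.1 hp).2,
    Nat.sub_add_cancel hk, Nat.cast_pow]
  exact (pow_le_pow_right₀ (mod_cast hk) hcard).trans (pow_floor_le_exp hk hξ)

theorem U2set_subset_squarefreeRough (ξ₁ ξ₂ ξ₃ : ℝ) :
    U2set ξ₁ ξ₂ ξ₃ ⊆ squarefreeRough ξ₁ ξ₃ := fun _ ⟨_, hu, hsq, hp⟩ =>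
  mem_squarefreeRough.2 ⟨hu, hsq, fun p hpu => (hp p hpu).1⟩

theorem U2set_finite (ξ₁ ξ₂ ξ₃ : ℝ) : (U2set ξ₁ ξ₂ ξ₃).Finite :=
  (squarefreeRough ξ₁ ξ₃).finite_toSet.subset (U2set_subset_squarefreeRough ξ₁ ξ₂ ξ₃)

section N4sum

variable {n k : ℕ} {F : MvPolynomial (Fin n) ℤ} {τ : ∀ p : ℕ, p.Prime → ℕ}
  {𝓛 : ∀ (p : ℕ) (hp : p.Prime), Fin (τ p hp) → Fin n → @PadicInt p ⟨hp⟩}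
  {Fstar : ∀ (p : ℕ) (hp : p.Prime), MvPolynomial (Fin n) (@PadicInt p ⟨hp⟩)}
  {C₁ B : ℝ} {ξ₁ : ℝ → ℝ}

theorem N4sum_eq_sum :
    N4sum F 𝓛 Fstar k C₁ ξ₁ B = ∑ u₁ ∈ (Cxi k (ξ₁ B)).divisors,
      ∑ u₂ ∈ (U2set_finite (ξ₁ B) (xi2 n B) (xi3 C₁ k B)).toFinset,
        Mplus (u₁ * u₂ * scrD k (ξ₁ B) B u₂)
          (Rset F 𝓛 Fstar k u₁ u₂ (scrD k (ξ₁ B) B u₂)) B /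
          (k : ℝ) ^ (scrD k (ξ₁ B) B u₂).primeFactors.card := by
  have hdiv : {u₁ : ℕ | u₁ ∣ Cxi k (ξ₁ B)} = ((Cxi k (ξ₁ B)).divisors : Set ℕ) := by
    ext u
    simp [Nat.mem_divisors, Cxi_ne_zero]
  rw [N4sum, hdiv, finsum_mem_coe_finset]
  exact Finset.sum_congr rfl fun u₁ _ => finsum_mem_eq_finite_toFinset_sum _ _

theorem N4sum_nonneg (hB : 0 ≤ B) : 0 ≤ N4sum F 𝓛 Fstar k C₁ ξ₁ B := by
  rw [N4sum_eq_sum]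
  refine Finset.sum_nonneg fun u₁ _ => Finset.sum_nonneg fun u₂ _ => ?_
  rw [Mplus]
  positivity

variable (hfact : ∀ p hp, F.map (Int.castRingHom (@PadicInt p ⟨hp⟩)) =
  Fstar p hp * ∏ i, linForm (𝓛 p hp i)) {g : ℕ → ℕ} {z : ℝ}
include hfact

theorem N4sum_le (hk : 1 < k) (hg : ∀ (p : ℕ) (hp : p.Prime), z < p →
      τ p hp ≤ g p ∧ ∀ i, @PadicInt.toZMod p ⟨hp⟩ ∘ 𝓛 p hp i ≠ 0)
    (hB : 0 ≤ B) (hz : z ≤ ξ₁ B) :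
    N4sum F 𝓛 Fstar k C₁ ξ₁ B ≤ (3 * B) ^ n * (Cxi k (ξ₁ B)).divisors.card *
      ∑ u ∈ (U2set_finite (ξ₁ B) (xi2 n B) (xi3 C₁ k B)).toFinset,
        (∏ p ∈ u.primeFactors, (g p : ℝ) / p) /
          (k : ℝ) ^ (scrD k (ξ₁ B) B u).primeFactors.card := by
  set U := (U2set_finite (ξ₁ B) (xi2 n B) (xi3 C₁ k B)).toFinset
  have hMplus : ∀ u₁ ∈ (Cxi k (ξ₁ B)).divisors, ∀ u₂ ∈ U,
      Mplus (u₁ * u₂ * scrD k (ξ₁ B) B u₂)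
        (Rset F 𝓛 Fstar k u₁ u₂ (scrD k (ξ₁ B) B u₂)) B ≤
          (3 * B) ^ n * ∏ p ∈ u₂.primeFactors, (g p : ℝ) / p := by
    intro u₁ hu₁ u₂ hu₂
    obtain ⟨-, -, hsq, hp⟩ := (Set.Finite.mem_toFinset _).1 hu₂
    have hu₁C := Nat.dvd_of_mem_divisors hu₁
    have hξp : ∀ p : ℕ, p.Prime → p ∣ u₂ → ξ₁ B < p := fun p hpp hpu =>
      (hp p (Nat.mem_primeFactors.2 ⟨hpp, hpu, hsq.ne_zero⟩)).1
    have hcop : Nat.Coprime (u₁ * scrD k (ξ₁ B) B u₂) u₂ :=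
      Nat.Coprime.mul_left (Nat.coprime_of_dvd fun p hpp hp₁ hp₂ =>
        (hξp p hpp hp₂).not_ge (le_of_prime_of_dvd_Cxi hpp (hp₁.trans hu₁C))) (coprime_scrD hk)
    rw [Mplus, mul_div_assoc]
    gcongr
    exact ncard_Rset_div_le hfact (ne_zero_of_dvd_ne_zero (Cxi_ne_zero _ _) hu₁C)
      (scrD_ne_zero hk) hsq hcop fun p hpp hpu => hg p hpp (hz.trans_lt (hξp p hpp hpu))
  calc N4sum F 𝓛 Fstar k C₁ ξ₁ B
      ≤ ∑ u₁ ∈ (Cxi k (ξ₁ B)).divisors, ∑ u ∈ U,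
          (3 * B) ^ n * (∏ p ∈ u.primeFactors, (g p : ℝ) / p) /
            (k : ℝ) ^ (scrD k (ξ₁ B) B u).primeFactors.card := by
        rw [N4sum_eq_sum]
        gcongr with u₁ hu₁ u₂ hu₂
        exact hMplus u₁ hu₁ u₂ hu₂
    _ = _ := by
        simp only [Finset.sum_const, nsmul_eq_mul, mul_div_assoc, ← Finset.mul_sum]
        ring

theorem N4sum_le_of_forall_sum_le {C x M : ℝ} {D : ℕ} (hk : 1 < k) (hC : 0 ≤ C)
    (hgD : ∀ p, p.Prime → g p ≤ D)
    (hsum : ∀ X, 0 ≤ X → ∑ u ∈ squarefreeRough z X, ∏ p ∈ u.primeFactors, (g p : ℝ) ≤ C * X)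
    (hg : ∀ (p : ℕ) (hp : p.Prime), z < p →
      τ p hp ≤ g p ∧ ∀ i, @PadicInt.toZMod p ⟨hp⟩ ∘ 𝓛 p hp i ≠ 0)
    (hB : 0 < B) (hz : z ≤ ξ₁ B) (hξ : 0 ≤ ξ₁ B) (hx : 0 ≤ x)
    (hlog : ∀ u ∈ U2set (ξ₁ B) (xi2 n B) (xi3 C₁ k B), x + 1 ≤ Real.log (B ^ 2 / u))
    (hM : ∀ J : Finset ℕ, (∀ j ∈ J, x ≤ (j : ℝ)) →
      ∑ j ∈ J, ((j : ℝ) + 1) ^ (k * D) / (k : ℝ) ^ (primesOneMod k (j / 12)).card ≤ M) :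
    N4sum F 𝓛 Fstar k C₁ ξ₁ B ≤
      3 ^ n * (Real.exp 1 * C) * B ^ n * Real.exp (2 * ((k : ℝ) - 1) * ξ₁ B) * M := by
  set U := (U2set_finite (ξ₁ B) (xi2 n B) (xi3 C₁ k B)).toFinset with hU
  set E := Real.exp (((k : ℝ) - 1) * ξ₁ B) with hE
  have hUlog : ∀ u ∈ U, x + 1 ≤ Real.log (B ^ 2 / u) := fun u hu =>
    hlog u ((Set.Finite.mem_toFinset _).1 hu)
  have hUsub : U ⊆ squarefreeRough z (xi3 C₁ k B) := fun u hu =>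
    squarefreeRough_subset hz _
      (U2set_subset_squarefreeRough _ _ _ ((Set.Finite.mem_toFinset _).1 hu))
  have hJ := hM (U.image fun u : ℕ => ⌊Real.log (B ^ 2 / u)⌋₊) fun j hj => by
    obtain ⟨u, hu, rfl⟩ := Finset.mem_image.1 hj
    linarith [hUlog u hu, Nat.sub_one_lt_floor (Real.log (B ^ 2 / u))]
  have hM₀ : 0 ≤ M := (Finset.sum_nonneg fun j _ => by positivity).trans hJ
  have hblocks := sum_prod_div_pow_card_scrD_le (g := fun p => (g p : ℝ)) (ξ := ξ₁ B) hk hC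
    (fun p => (g p).cast_nonneg) (fun p hp => mod_cast hgD p hp) hsum hB hUsub
    fun u hu => by linarith [hUlog u hu]
  calc N4sum F 𝓛 Fstar k C₁ ξ₁ B
      ≤ (3 * B) ^ n * (Cxi k (ξ₁ B)).divisors.card * (Real.exp 1 * C * (k : ℝ) ^ ⌊ξ₁ B⌋₊ * M) :=
        (N4sum_le hfact hk hg hB.le hz).trans <| by
          refine mul_le_mul_of_nonneg_left (hblocks.trans ?_) (by positivity)
          gcongr
    _ ≤ (3 * B) ^ n * E * (Real.exp 1 * C * E * M) := by
        gcongr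
        · exact card_divisors_Cxi_le hk.le hξ
        · exact pow_floor_le_exp hk.le hξ
    _ = 3 ^ n * (Real.exp 1 * C) * B ^ n * Real.exp (2 * ((k : ℝ) - 1) * ξ₁ B) * M := by
        rw [show 2 * ((k : ℝ) - 1) * ξ₁ B = ((k : ℝ) - 1) * ξ₁ B + ((k : ℝ) - 1) * ξ₁ B by ring,
          Real.exp_add, ← hE]
        ring

end N4sum

theorem tendsto_log_log : Tendsto (fun B : ℝ => Real.log (Real.log B)) atTop atTop :=
  Real.tendsto_log_atTop.comp Real.tendsto_log_atTop

theorem eventually_log2_eq : ∀ᶠ B : ℝ in atTop, log2 B = Real.log (Real.log B) := by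
  filter_upwards [Real.tendsto_log_atTop.eventually_ge_atTop 1,
    tendsto_log_log.eventually_ge_atTop 1] with B hB hlogB
  rw [log2, log1, log1, max_eq_right hB, max_eq_right hlogB]

theorem eventually_log3_eq :
    ∀ᶠ B : ℝ in atTop, log3 B = Real.log (Real.log (Real.log B)) := by
  filter_upwards [eventually_log2_eq,
    (Real.tendsto_log_atTop.comp tendsto_log_log).eventually_ge_atTop 1] with B hlog2 hB
  rw [log3, log1, hlog2]
  exact max_eq_right hB

theorem log3_pos (B : ℝ) : 0 < log3 B := one_pos.trans_le (le_max_left _ _)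

theorem tendsto_div_log_atTop : Tendsto (fun x : ℝ => x / Real.log x) atTop atTop := by
  have hinv : Tendsto (fun x : ℝ => Real.log x / x) atTop (nhdsWithin 0 (Set.Ioi 0)) := by
    refine tendsto_nhdsWithin_iff.2 ⟨?_, ?_⟩
    · simpa using Real.isLittleO_log_id_atTop.tendsto_div_nhds_zero
    · filter_upwards [eventually_gt_atTop 1] with x hx
      exact div_pos (Real.log_pos hx) (by linarith)
  exact (tendsto_inv_nhdsGT_zero.comp hinv).congr fun x => inv_div _ _

theorem tendsto_log2_div_log3 : Tendsto (fun B => log2 B / log3 B) atTop atTop := by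
  refine (tendsto_div_log_atTop.comp tendsto_log_log).congr' ?_
  filter_upwards [eventually_log2_eq, eventually_log3_eq] with B hlog2 hlog3
  rw [hlog2, hlog3, Function.comp_apply]

theorem eventually_log_rpow_div_log3_eq (c : ℝ) :
    ∀ᶠ B in atTop, Real.log B ^ (c / log3 B) = Real.exp (c * (log2 B / log3 B)) := by
  filter_upwards [eventually_log2_eq, Real.tendsto_log_atTop.eventually_gt_atTop 0]
    with B hlog2 hB
  rw [Real.rpow_def_of_pos hB, hlog2]
  congr 1
  ring

theorem eventually_log_log_add_one_le {C₁ : ℝ} (hC₁ : 0 < C₁) {k : ℕ} (hk : 2 ≤ k) :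
    ∀ᶠ B : ℝ in atTop, ∀ u : ℕ, 0 < u → (u : ℝ) ≤ xi3 C₁ k B →
      Real.log (Real.log B) + 1 ≤ Real.log (B ^ 2 / u) := by
  filter_upwards [eventually_gt_atTop 0, Real.tendsto_log_atTop.eventually_gt_atTop 0,
    tendsto_log_log.eventually_ge_atTop 0,
    tendsto_log_log.eventually_ge_atTop (3 * (1 + Real.log C₁))] with B hB hl hll₀ hll u hu₀ hu
  have hu₀' : (0 : ℝ) < u := mod_cast hu₀
  have hk₂ : (2 : ℝ) ≤ k := mod_cast hk
  have hlogu : Real.log u ≤ Real.log C₁ + 2 * Real.log B +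
      -(2 * (k : ℝ)) / 3 * Real.log (Real.log B) := by
    refine (Real.log_le_log hu₀' hu).trans (le_of_eq ?_)
    rw [xi3, Real.log_mul (by positivity) (by positivity), Real.log_mul (by positivity)
      (by positivity), Real.log_pow, Real.log_rpow hl]
    norm_num
  rw [Real.log_div (by positivity) (by positivity), Real.log_pow]
  push_cast
  nlinarith [mul_le_mul_of_nonneg_right hk₂ hll₀]

theorem exists_forall_sum_add_one_pow_div_pow_card_primesOneMod_le {k : ℕ} (hk : 1 < k) (A : ℕ) :
    ∃ c K : ℝ, 0 < c ∧ 0 < K ∧ ∀ᶠ x : ℝ in atTop, ∀ J : Finset ℕ, (∀ j ∈ J, x ≤ (j : ℝ)) →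
      ∑ j ∈ J, ((j : ℝ) + 1) ^ A / (k : ℝ) ^ (primesOneMod k (j / 12)).card ≤
        K * Real.exp (-(c * (x / Real.log x))) := by
  have : NeZero k := ⟨by omega⟩
  have hk₁ : (1 : ℝ) < k := mod_cast hk
  obtain ⟨c, hc, hcard⟩ := exists_mul_div_log_le_card_primes (isUnit_one (M := ZMod k))
  obtain ⟨K, hK, hsum⟩ := exists_sum_add_one_pow_div_pow_le hk₁ hc (s := 12) (by norm_num)
    (N := fun y => (primesOneMod k y).card) hcard A
  have := Real.log_pos hk₁
  exact ⟨Real.log k * c / (2 * 12), K, by positivity, hK, hsum⟩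

theorem exists_N4sum_le {n d k : ℕ} (hn : 2 ≤ n) (hd : n ≤ d) (hk : 2 ≤ k)
    {F : MvPolynomial (Fin n) ℤ} {L : Fin d → Fin n → ℂ} (hF : IsDecomp F L)
    (hirr : Irreducible (F.map (Int.castRingHom ℚ))) (hΔ : discProd L ≠ 0)
    {C₁ : ℝ} (hC₁ : 0 < C₁) {τ : ∀ p : ℕ, p.Prime → ℕ}
    {𝓛 : ∀ (p : ℕ) (hp : p.Prime), Fin (τ p hp) → Fin n → @PadicInt p ⟨hp⟩}
    {Fstar : ∀ (p : ℕ) (hp : p.Prime), MvPolynomial (Fin n) (@PadicInt p ⟨hp⟩)}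
    (hfact : ∀ p hp, F.map (Int.castRingHom (@PadicInt p ⟨hp⟩)) =
      Fstar p hp * ∏ i, linForm (𝓛 p hp i)) :
    ∃ C₄ : ℝ, 0 < C₄ ∧ ∃ C : ℝ, 0 < C ∧ ∀ ξ₁ : ℝ → ℝ, Tendsto ξ₁ atTop atTop →
      ∀ᶠ B : ℝ in atTop, N4sum F 𝓛 Fstar k C₁ ξ₁ B ≤
        C * B ^ n * Real.exp (2 * ((n : ℝ) + 1) * ((k : ℝ) - 1) * ξ₁ B) *
          Real.exp (-(C₄ * (log2 B / log3 B))) := by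
  obtain ⟨z, C, D, g, hC, hgD, hsum, hg⟩ := exists_linear_factor_majorant hn hd hF hirr hΔ
  obtain ⟨c, K, hc, hK, htail⟩ :=
    exists_forall_sum_add_one_pow_div_pow_card_primesOneMod_le (k := k) (by omega) (k * D)
  refine ⟨c, hc, 3 ^ n * (Real.exp 1 * (C + 1)) * K, by positivity, fun ξ₁ hξ => ?_⟩
  have hgτ : ∀ (p : ℕ) (hp : p.Prime), z < p →
      τ p hp ≤ g p ∧ ∀ i, @PadicInt.toZMod p ⟨hp⟩ ∘ 𝓛 p hp i ≠ 0 := fun p hp hzp =>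
    have : Fact p.Prime := ⟨hp⟩
    hg p hp hzp _ _ _ (map_intCast_eq_mul_prod_linForm PadicInt.toZMod (hfact p hp))
  filter_upwards [eventually_gt_atTop 0, hξ.eventually_ge_atTop z, hξ.eventually_ge_atTop 0,
    tendsto_log_log.eventually htail, tendsto_log_log.eventually_ge_atTop 0,
    eventually_log_log_add_one_le hC₁ hk, eventually_log2_eq, eventually_log3_eq]
    with B hB hz hξ₀ hM hx hlog hlog2 hlog3
  have hk₁ : (0 : ℝ) ≤ (k : ℝ) - 1 := sub_nonneg.2 (mod_cast one_le_two.trans hk)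
  have hexp : 2 * ((k : ℝ) - 1) * ξ₁ B ≤ 2 * ((n : ℝ) + 1) * ((k : ℝ) - 1) * ξ₁ B := by
    gcongr
    linarith [n.cast_nonneg (α := ℝ)]
  rw [hlog2, hlog3]
  set W := Real.exp (-(c * (Real.log (Real.log B) / Real.log (Real.log (Real.log B)))))
  calc N4sum F 𝓛 Fstar k C₁ ξ₁ B
      ≤ 3 ^ n * (Real.exp 1 * (C + 1)) * B ^ n * Real.exp (2 * ((k : ℝ) - 1) * ξ₁ B) * (K * W) :=
        N4sum_le_of_forall_sum_le hfact (by omega) (by positivity) hgD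
          (fun X hX => (hsum X hX).trans (by gcongr; linarith)) hgτ hB hz hξ₀ hx
          (fun u ⟨hu₀, hu, _⟩ => hlog u hu₀ hu) hM
    _ ≤ 3 ^ n * (Real.exp 1 * (C + 1)) * B ^ n *
          Real.exp (2 * ((n : ℝ) + 1) * ((k : ℝ) - 1) * ξ₁ B) * (K * W) := by gcongr
    _ = _ := by ring

section BalancedChoice

variable {b c : ℝ}

theorem tendsto_mul_log2_div_mul_log3 (hb : 0 < b) (hc : 0 < c) :
    Tendsto (fun B => c * log2 B / (b * log3 B)) atTop atTop :=
  (tendsto_log2_div_log3.const_mul_atTop (div_pos hc hb)).congr fun _ => div_mul_div_comm ..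

theorem eventually_exp_max_one_mul_exp_neg_eq (hb : 0 < b) (hc : 0 < c) : ∀ᶠ B in atTop,
    Real.exp (b / 2 * max 1 (c * log2 B / (b * log3 B))) * Real.exp (-(c * (log2 B / log3 B))) =
      Real.exp (-c * log2 B / (2 * log3 B)) := by
  filter_upwards [(tendsto_mul_log2_div_mul_log3 hb hc).eventually_ge_atTop 1] with B hB
  have := log3_pos B
  rw [← Real.exp_add, max_eq_right hB]
  congr 1
  field_simp
  ring

theorem tendsto_exp_neg_mul_log2_div_log3 (hc : 0 < c) :
    Tendsto (fun B => Real.exp (-c * log2 B / (2 * log3 B))) atTop (nhds 0) := by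
  refine Real.tendsto_exp_atBot.comp ((tendsto_log2_div_log3.const_mul_atTop_of_neg
    (show -c / 2 < 0 by linarith)).congr fun B => ?_)
  rw [div_mul_div_comm]

end BalancedChoice

theorem tendsto_N4sum_div_pow_zero {n k : ℕ} {F : MvPolynomial (Fin n) ℤ}
    {τ : ∀ p : ℕ, p.Prime → ℕ}
    {𝓛 : ∀ (p : ℕ) (hp : p.Prime), Fin (τ p hp) → Fin n → @PadicInt p ⟨hp⟩}
    {Fstar : ∀ (p : ℕ) (hp : p.Prime), MvPolynomial (Fin n) (@PadicInt p ⟨hp⟩)}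
    {C C₁ : ℝ} {ξ₁ φ : ℝ → ℝ} (hφ : Tendsto φ atTop (nhds 0))
    (hN : ∀ᶠ B in atTop, N4sum F 𝓛 Fstar k C₁ ξ₁ B ≤ C * B ^ n * φ B) :
    Tendsto (fun B => N4sum F 𝓛 Fstar k C₁ ξ₁ B / B ^ n) atTop (nhds 0) := by
  refine squeeze_zero' ?_ ?_ (by simpa using hφ.const_mul C)
  · filter_upwards [eventually_ge_atTop 0] with B hB
    exact div_nonneg (N4sum_nonneg hB) (by positivity)
  · filter_upwards [hN, eventually_gt_atTop 0] with B hNB hB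
    rw [div_le_iff₀ (by positivity)]
    linarith

theorem stmt15_general {n d k : ℕ} (hn : 2 ≤ n) (hd : n ≤ d) (hk : 2 ≤ k)
    {F : MvPolynomial (Fin n) ℤ} {L : Fin d → Fin n → ℂ} (hF : IsDecomp F L)
    (hirr : Irreducible (F.map (Int.castRingHom ℚ))) (hΔ : discProd L ≠ 0)
    {C₁ : ℝ} (hC₁ : 0 < C₁) {τ : ∀ p : ℕ, p.Prime → ℕ}
    {𝓛 : ∀ (p : ℕ) (hp : p.Prime), Fin (τ p hp) → Fin n → @PadicInt p ⟨hp⟩}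
    {Fstar : ∀ (p : ℕ) (hp : p.Prime), MvPolynomial (Fin n) (@PadicInt p ⟨hp⟩)}
    (hfact : ∀ p hp, F.map (Int.castRingHom (@PadicInt p ⟨hp⟩)) =
      Fstar p hp * ∏ i, linForm (𝓛 p hp i)) :
    ∃ C₄ : ℝ, 0 < C₄ ∧
      (∀ ξ₁ : ℝ → ℝ, Tendsto ξ₁ atTop atTop → ∃ C : ℝ, 0 < C ∧ ∀ᶠ B : ℝ in atTop,
        N4sum F 𝓛 Fstar k C₁ ξ₁ B ≤
          C * B ^ n * Real.exp (2 * ((n : ℝ) + 1) * ((k : ℝ) - 1) * ξ₁ B) /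
            Real.log B ^ (C₄ / log3 B)) ∧
      (∃ C' : ℝ, 0 < C' ∧
        (∀ᶠ B : ℝ in atTop,
          N4sum F 𝓛 Fstar k C₁
            (fun B => max 1 (C₄ * log2 B / (4 * ((n : ℝ) + 1) * ((k : ℝ) - 1) * log3 B))) B ≤
            C' * B ^ n * Real.exp (-C₄ * log2 B / (2 * log3 B))) ∧
        Tendsto (fun B : ℝ =>
          N4sum F 𝓛 Fstar k C₁
            (fun B => max 1 (C₄ * log2 B / (4 * ((n : ℝ) + 1) * ((k : ℝ) - 1) * log3 B))) B
          / B ^ n) atTop (nhds 0)) := by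
  obtain ⟨C₄, hC₄, C, hC, hN⟩ := exists_N4sum_le hn hd hk hF hirr hΔ hC₁ hfact
  have hk₁ : 0 < (k : ℝ) - 1 := sub_pos.2 (mod_cast one_lt_two.trans_le hk)
  have hb : 0 < 4 * ((n : ℝ) + 1) * ((k : ℝ) - 1) := by positivity
  have hbal : ∀ᶠ B in atTop, N4sum F 𝓛 Fstar k C₁
      (fun B => max 1 (C₄ * log2 B / (4 * ((n : ℝ) + 1) * ((k : ℝ) - 1) * log3 B))) B ≤
        C * B ^ n * Real.exp (-C₄ * log2 B / (2 * log3 B)) := by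
    filter_upwards [eventually_exp_max_one_mul_exp_neg_eq hb hC₄, hN _ (tendsto_atTop_mono
      (fun _ => le_max_right _ _) (tendsto_mul_log2_div_mul_log3 hb hC₄))] with B hexp hNB
    refine hNB.trans_eq ?_
    rw [mul_assoc _ (Real.exp _), ← hexp]
    ring_nf
  refine ⟨C₄, hC₄, fun ξ₁ hξ => ⟨C, hC, ?_⟩, C, hC, hbal,
    tendsto_N4sum_div_pow_zero (tendsto_exp_neg_mul_log2_div_log3 hC₄) hbal⟩
  filter_upwards [hN ξ₁ hξ, eventually_log_rpow_div_log3_eq C₄] with B hNB hexp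
  rwa [hexp, div_eq_mul_inv, ← Real.exp_neg]

theorem stmt15 (n d k : ℕ) (hn : 2 ≤ n) (hd : n < d) (hk : 2 ≤ k)
    (F : MvPolynomial (Fin n) ℤ) (L : Fin d → Fin n → ℂ)
    (hF : IsDecomp F L) (hirr : Irreducible (F.map (Int.castRingHom ℚ)))
    (hΔ : discProd L ≠ 0)
    (hkd : ((d : ℝ) - 2) / (n : ℝ) ≤ (k : ℝ)) (C₁ : ℝ) (hC₁ : 0 < C₁)
    (τ : ∀ p : ℕ, p.Prime → ℕ)
    (𝓛 : ∀ (p : ℕ) (hp : p.Prime), Fin (τ p hp) → Fin n → @PadicInt p ⟨hp⟩)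
    (Fstar : ∀ (p : ℕ) (hp : p.Prime), MvPolynomial (Fin n) (@PadicInt p ⟨hp⟩))
    (hfact : ∀ (p : ℕ) (hp : p.Prime), IsPadicFact F p hp (𝓛 p hp) (Fstar p hp)) :
    ∃ C₄ : ℝ, 0 < C₄ ∧
      (∀ ξ₁ : ℝ → ℝ, Xi1Good ξ₁ → ∃ C : ℝ, 0 < C ∧ ∀ᶠ B : ℝ in atTop,
        N4sum F 𝓛 Fstar k C₁ ξ₁ B ≤
          C * B ^ n * Real.exp (2 * ((n : ℝ) + 1) * ((k : ℝ) - 1) * ξ₁ B) /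
            Real.log B ^ (C₄ / log3 B)) ∧
      (∃ C' : ℝ, 0 < C' ∧
        (∀ᶠ B : ℝ in atTop,
          N4sum F 𝓛 Fstar k C₁
            (fun B => max 1 (C₄ * log2 B / (4 * ((n : ℝ) + 1) * ((k : ℝ) - 1) * log3 B))) B ≤
            C' * B ^ n * Real.exp (-C₄ * log2 B / (2 * log3 B))) ∧
        Tendsto (fun B : ℝ =>
          N4sum F 𝓛 Fstar k C₁
            (fun B => max 1 (C₄ * log2 B / (4 * ((n : ℝ) + 1) * ((k : ℝ) - 1) * log3 B))) B
          / B ^ n) atTop (nhds 0)) := by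
  obtain ⟨C₄, hC₄, hbound, hbalanced⟩ :=
    stmt15_general hn hd.le hk hF hirr hΔ hC₁ fun p hp => (hfact p hp).1
  exact ⟨C₄, hC₄, fun ξ₁ hξ => hbound ξ₁ hξ.2.1, hbalanced⟩

end
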